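/- arXiv:1908.05882 — 5 statements merged into one kernel-verified Lean document; each statement's English description precedes it below -/
import Mathlib

section
/- Carleman inequality with quadratic weight (Lemma 2.5). Let n ≥ 2, let Ω ⊂ ℝⁿ be a bounded open set, let σ ∈ {+1,−1} and c ∈ ℝ, and let φ(x) = σ·x_n + |x'|² − σ·c², where x = (x',x_n). Let A : Ω → ℂⁿ be bounded and Lipschitz and q : Ω → ℂ be bounded measurable. Then there exist C > 0 and h₀ ∈ (0,1) such that for all h ∈ (0,h₀) and all w ∈ C_c^∞(Ω): h·‖w‖_{L²(Ω)} ≤ C·‖e^{φ/h} h⁴ L_{A,q}(e^{−φ/h} w)‖_{L²(Ω)}. -/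
open MeasureTheory Real Set

noncomputable section

def pd {n : ℕ} (j : Fin n) (u : EuclideanSpace ℝ (Fin n) → ℂ) :
    EuclideanSpace ℝ (Fin n) → ℂ :=
  fun x => fderiv ℝ u x (EuclideanSpace.single j 1)

def pdR {n : ℕ} (j : Fin n) (φ : EuclideanSpace ℝ (Fin n) → ℝ) :
    EuclideanSpace ℝ (Fin n) → ℝ :=
  fun x => fderiv ℝ φ x (EuclideanSpace.single j 1)

def opL {n : ℕ} (A : EuclideanSpace ℝ (Fin n) → Fin n → ℂ)
    (q : EuclideanSpace ℝ (Fin n) → ℂ) (u : EuclideanSpace ℝ (Fin n) → ℂ) :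
    EuclideanSpace ℝ (Fin n) → ℂ :=
  fun x => (∑ j : Fin n, (pd j)^[4] u x)
    - Complex.I * (∑ j : Fin n, A x j * pd j u x) + q x * u x

def IsCcInfty {n : ℕ} (Ω : Set (EuclideanSpace ℝ (Fin n)))
    (w : EuclideanSpace ℝ (Fin n) → ℂ) : Prop :=
  ContDiff ℝ (⊤ : ℕ∞) w ∧ HasCompactSupport w ∧ tsupport w ⊆ Ω

def l2sq {n : ℕ} (Ω : Set (EuclideanSpace ℝ (Fin n)))
    (f : EuclideanSpace ℝ (Fin n) → ℂ) : ℝ :=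
  ∫ x in Ω, ‖f x‖ ^ 2

def l2norm {n : ℕ} (Ω : Set (EuclideanSpace ℝ (Fin n)))
    (f : EuclideanSpace ℝ (Fin n) → ℂ) : ℝ :=
  Real.sqrt (l2sq Ω f)

def gradsq {n : ℕ} (Ω : Set (EuclideanSpace ℝ (Fin n)))
    (w : EuclideanSpace ℝ (Fin n) → ℂ) : ℝ :=
  ∫ x in Ω, ∑ j : Fin n, ‖pd j w x‖ ^ 2

def BddLipOn {n : ℕ} (Ω : Set (EuclideanSpace ℝ (Fin n)))
    (A : EuclideanSpace ℝ (Fin n) → Fin n → ℂ) : Prop :=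
  (∃ M, ∀ x ∈ Ω, ‖A x‖ ≤ M) ∧ ∃ K, LipschitzOnWith K A Ω

def BddMeasOn {n : ℕ} (Ω : Set (EuclideanSpace ℝ (Fin n)))
    (q : EuclideanSpace ℝ (Fin n) → ℂ) : Prop :=
  Measurable q ∧ ∃ M, ∀ x ∈ Ω, ‖q x‖ ≤ M

def derivsL2 {n : ℕ} (Ω : Set (EuclideanSpace ℝ (Fin n)))
    (u : EuclideanSpace ℝ (Fin n) → ℂ) : Prop :=
  ∀ js : List (Fin n), js.length ≤ 4 →
    IntegrableOn (fun x => ‖(js.foldr pd u) x‖ ^ 2) Ω volume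

def symA {n : ℕ} (φ : EuclideanSpace ℝ (Fin n) → ℝ)
    (x ξ : EuclideanSpace ℝ (Fin n)) : ℝ :=
  ∑ j : Fin n, ((ξ j) ^ 4 - 6 * (pdR j φ x) ^ 2 * (ξ j) ^ 2 + (pdR j φ x) ^ 4)

def symB {n : ℕ} (φ : EuclideanSpace ℝ (Fin n) → ℝ)
    (x ξ : EuclideanSpace ℝ (Fin n)) : ℝ :=
  ∑ j : Fin n, (4 * pdR j φ x * (ξ j) ^ 3 - 4 * (pdR j φ x) ^ 3 * ξ j)

def poisson {n : ℕ} (φ : EuclideanSpace ℝ (Fin n) → ℝ)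
    (x ξ : EuclideanSpace ℝ (Fin n)) : ℝ :=
  ∑ k : Fin n,
    (fderiv ℝ (fun ξ' => symA φ x ξ') ξ (EuclideanSpace.single k 1) *
       fderiv ℝ (fun y => symB φ y ξ) x (EuclideanSpace.single k 1) -
     fderiv ℝ (fun y => symA φ y ξ) x (EuclideanSpace.single k 1) *
       fderiv ℝ (fun ξ' => symB φ x ξ') ξ (EuclideanSpace.single k 1))

/-!
Conjugating with `e^{φ/h}` turns `h∂ⱼ` into `dⱼ = h∂ⱼ - ∂ⱼφ`, with formal adjoint
`bⱼ = -h∂ⱼ - ∂ⱼφ`. For `j ≠ n` the derivative `∂ⱼφ = 2xⱼ` gives `[bⱼ, dⱼ] = 4h`, as for annihilation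
and creation operators, whereas `bₙ` and `dₙ` commute and `‖dₙ f‖ ≥ |σ| ‖f‖`. All other pairs
commute.

Write `P = ∑ dⱼ⁴`. Expanding `[bⱼ⁴, dⱼ⁴]` in powers of `dⱼ bⱼ` shows
`‖P f‖² ≥ 64 h ∑ ‖bⱼ dⱼ bⱼ f‖²`, the sum running over `j ≠ n`. To control the direction `n`, solve
`bₙ² v = f` by a Fourier multiplier and pair `P f` with `dₙ² v`: the term `j = n` is `‖dₙ² f‖²`, and
the others are at most `‖dⱼ² f‖²`. Interpolating between `‖f‖` and `‖bⱼ dⱼ bⱼ f‖` then gives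
`h (‖f‖² + ∑ ‖dⱼ f‖²) ≤ C ‖P f‖²` for small `h`. The lower order terms carry a factor `h³` and are
absorbed into the left-hand side.
-/

namespace Carleman

section Ladder

variable {K R : Type*} [CommRing K] [Ring R] [Algebra K R] {b d : R} {k : K}

theorem pow_mul_of_commutator (h : b * d = d * b + k • (1 : R)) (m : ℕ) :
    b ^ m * (d * b) = (d * b + (m * k) • (1 : R)) * b ^ m := by
  induction m with
  | zero => simp
  | succ m ih =>
    have hb : b * (d * b) = (d * b + k • (1 : R)) * b := by rw [← mul_assoc, h]
    rw [pow_succ', mul_assoc, ih, ← mul_assoc, mul_add, hb, ← mul_assoc]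
    congr 1
    simp only [add_mul, mul_smul_comm, smul_mul_assoc, mul_one, one_mul, Nat.cast_succ]
    module

theorem mul_pow_of_commutator (h : b * d = d * b + k • (1 : R)) (m : ℕ) :
    d ^ m * (d * b) = (d * b - (m * k) • (1 : R)) * d ^ m := by
  induction m with
  | zero => simp
  | succ m ih =>
    have hd : d * (d * b) = (d * b - k • (1 : R)) * d := by
      rw [sub_mul, mul_assoc d b, h, mul_add]
      simp
    rw [pow_succ', mul_assoc, ih, ← mul_assoc, mul_sub, hd, ← mul_assoc]
    congr 1
    simp only [sub_mul, mul_smul_comm, smul_mul_assoc, mul_one, one_mul, Nat.cast_succ]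
    module

theorem pow_succ_mul_pow_succ (h : b * d = d * b + k • (1 : R)) (m : ℕ) :
    b ^ (m + 1) * d ^ (m + 1) = (d * b + ((m + 1 : K) * k) • (1 : R)) * (b ^ m * d ^ m) := by
  rw [pow_succ, pow_succ', mul_assoc, ← mul_assoc b, h, ← mul_assoc, mul_add,
    pow_mul_of_commutator h, ← mul_assoc]
  simp only [add_mul, mul_smul_comm, smul_mul_assoc, mul_one, one_mul]
  module

theorem pow_succ_mul_pow_succ' (h : b * d = d * b + k • (1 : R)) (m : ℕ) :
    d ^ (m + 1) * b ^ (m + 1) = (d * b - (m * k) • (1 : R)) * (d ^ m * b ^ m) := by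
  rw [pow_succ, pow_succ', mul_assoc, ← mul_assoc d b, ← mul_assoc, mul_pow_of_commutator h,
    mul_assoc]

theorem pow_two_mul_pow_two (h : b * d = d * b + k • (1 : R)) :
    b ^ 2 * d ^ 2 = (d * b) ^ 2 + (3 * k) • (d * b) + (2 * k ^ 2) • (1 : R) := by
  rw [pow_succ_mul_pow_succ h 1, pow_one, pow_one, h]
  simp only [mul_add, add_mul, smul_mul_assoc, mul_smul_comm, one_mul, mul_one, pow_two,
    Nat.cast_one]
  module

theorem pow_two_mul_pow_two' (h : b * d = d * b + k • (1 : R)) :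
    d ^ 2 * b ^ 2 = (d * b) ^ 2 - k • (d * b) := by
  rw [pow_succ_mul_pow_succ' h 1, pow_one, pow_one]
  simp only [sub_mul, smul_mul_assoc, one_mul, pow_two, Nat.cast_one]

theorem pow_four_mul_pow_four_sub (h : b * d = d * b + k • (1 : R)) :
    b ^ 4 * d ^ 4 - d ^ 4 * b ^ 4 = (16 * k) • (d * b) ^ 3 + (24 * k ^ 2) • (d * b) ^ 2
      + (56 * k ^ 3) • (d * b) + (24 * k ^ 4) • (1 : R) := by
  rw [pow_succ_mul_pow_succ h 3, pow_succ_mul_pow_succ h 2, pow_two_mul_pow_two h,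
    pow_succ_mul_pow_succ' h 3, pow_succ_mul_pow_succ' h 2, pow_two_mul_pow_two' h]
  simp only [mul_add, add_mul, mul_sub, sub_mul, smul_mul_assoc, mul_smul_comm, one_mul, mul_one,
    pow_succ, pow_zero, mul_assoc, smul_add, smul_sub, smul_smul, Nat.cast_ofNat]
  module

end Ladder

theorem sum_mul_sum_sub_of_commute {ι R : Type*} [Ring R] {D B : ι → R} (s : Finset ι)
    (hcomm : ∀ j l, j ≠ l → Commute (B j) (D l)) :
    (∑ j ∈ s, B j) * (∑ j ∈ s, D j) - (∑ j ∈ s, D j) * (∑ j ∈ s, B j) =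
      ∑ j ∈ s, (B j * D j - D j * B j) := by
  classical
  rw [Finset.sum_mul_sum, Finset.sum_mul_sum,
    Finset.sum_comm (s := s) (t := s) (f := fun i j => D i * B j), ← Finset.sum_sub_distrib]
  refine Finset.sum_congr rfl fun j hj => ?_
  rw [← Finset.sum_sub_distrib]
  exact Finset.sum_eq_single_of_mem j hj fun l _ hl => sub_eq_zero.2 (hcomm j l hl.symm).eq

theorem mul_le_add_div {t : ℝ} (ht : 0 < t) (x y : ℝ) : x * y ≤ (t * x ^ 2 + y ^ 2 / t) / 2 := by
  have h : t * (y ^ 2 / t) = y ^ 2 := mul_div_cancel₀ _ ht.ne'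
  nlinarith [sq_nonneg (t * x - y)]

section FormalAdjoint

variable {V H : Type*} [AddCommGroup V] [Module ℂ V] [NormedAddCommGroup H]
  [InnerProductSpace ℂ H] {T : V →ₗ[ℂ] H} {b b' d d' : Module.End ℂ V}

/-- `b` is the formal adjoint of `d` for the inner product that `T` pulls back to the core `V` of
test vectors; `d` and `b` need not extend to bounded operators on `H`. -/
def IsFormalAdjoint (T : V →ₗ[ℂ] H) (d b : Module.End ℂ V) : Prop :=
  ∀ f g, inner ℂ (T (d f)) (T g) = inner ℂ (T f) (T (b g))

namespace IsFormalAdjoint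

theorem symm (hdb : IsFormalAdjoint T d b) : IsFormalAdjoint T b d := fun f g => by
  rw [← inner_conj_symm, ← hdb g f, inner_conj_symm]

theorem mul (hdb : IsFormalAdjoint T d b) (hdb' : IsFormalAdjoint T d' b') :
    IsFormalAdjoint T (d * d') (b' * b) := fun f g => by
  simp only [Module.End.mul_apply, hdb _ _, hdb' _ _]

theorem pow (hdb : IsFormalAdjoint T d b) : ∀ m : ℕ, IsFormalAdjoint T (d ^ m) (b ^ m)
  | 0 => fun _ _ => rfl
  | m + 1 => by
    rw [pow_succ', pow_succ]
    exact hdb.mul (hdb.pow m)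

theorem re_inner_mul_apply (hdb : IsFormalAdjoint T d b) (f : V) :
    (inner ℂ (T f) (T ((b * d) f))).re = ‖T (d f)‖ ^ 2 := by
  rw [Module.End.mul_apply, ← hdb, ← RCLike.re_eq_complex_re, inner_self_eq_norm_sq]

theorem sum {ι : Type*} {D B : ι → Module.End ℂ V} (s : Finset ι)
    (hDB : ∀ j, IsFormalAdjoint T (D j) (B j)) :
    IsFormalAdjoint T (∑ j ∈ s, D j) (∑ j ∈ s, B j) := fun f g => by
  simp only [LinearMap.sum_apply, map_sum, sum_inner, inner_sum, hDB _ _ _]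

theorem norm_apply_eq_of_commute (hdb : IsFormalAdjoint T d b) (h : Commute b d) (f : V) :
    ‖T (d f)‖ = ‖T (b f)‖ := by
  rw [← sq_eq_sq₀ (norm_nonneg _) (norm_nonneg _), ← hdb.re_inner_mul_apply,
    ← hdb.symm.re_inner_mul_apply, h.eq]

theorem norm_mul_le_of_add_eq (hdb : IsFormalAdjoint T d b) (h : Commute b d) {c : ℂ}
    (hc : d + b = c • 1) (f : V) : ‖c‖ * ‖T f‖ ≤ 2 * ‖T (d f)‖ := by
  have hsum : T (d f) + T (b f) = c • T f := by
    rw [← map_add, ← LinearMap.add_apply, hc, LinearMap.smul_apply, Module.End.one_apply, map_smul]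
  calc ‖c‖ * ‖T f‖ = ‖T (d f) + T (b f)‖ := by rw [hsum, norm_smul]
    _ ≤ ‖T (d f)‖ + ‖T (b f)‖ := norm_add_le _ _
    _ = 2 * ‖T (d f)‖ := by rw [← hdb.norm_apply_eq_of_commute h, two_mul]

theorem norm_apply_sq_le (hdb : IsFormalAdjoint T d b) (f : V) :
    ‖T (d f)‖ ^ 2 ≤ ‖T f‖ * ‖T (b (d f))‖ := by
  rw [← hdb.re_inner_mul_apply]
  exact (Complex.re_le_norm _).trans (norm_inner_le_norm _ _)

variable {k : ℝ}

theorem norm_apply_sq (hdb : IsFormalAdjoint T d b) (h : b * d = d * b + (k : ℂ) • 1) (f : V) :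
    ‖T (d f)‖ ^ 2 = ‖T (b f)‖ ^ 2 + k * ‖T f‖ ^ 2 := by
  rw [← hdb.re_inner_mul_apply, h, ← hdb.symm.re_inner_mul_apply]
  simp [inner_self_eq_norm_sq_to_K, ← Complex.ofReal_pow]

theorem norm_pow_two_apply_sq (hdb : IsFormalAdjoint T d b) (h : b * d = d * b + (k : ℂ) • 1)
    (f : V) : ‖T ((d ^ 2) f)‖ ^ 2 =
      ‖T (d (b f))‖ ^ 2 + 3 * k * ‖T (b f)‖ ^ 2 + 2 * k ^ 2 * ‖T f‖ ^ 2 := by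
  rw [← (hdb.pow 2).re_inner_mul_apply, pow_two_mul_pow_two h, ← hdb.symm.re_inner_mul_apply,
    ← Module.End.mul_apply, ← (hdb.mul hdb.symm).re_inner_mul_apply, ← pow_two]
  simp [inner_self_eq_norm_sq_to_K, ← Complex.ofReal_pow]

theorem norm_pow_two_apply_sq' (hdb : IsFormalAdjoint T d b) (h : b * d = d * b + (k : ℂ) • 1)
    (f : V) : ‖T ((b ^ 2) f)‖ ^ 2 = ‖T (d (b f))‖ ^ 2 - k * ‖T (b f)‖ ^ 2 := by
  rw [← (hdb.symm.pow 2).re_inner_mul_apply, pow_two_mul_pow_two' h,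
    ← hdb.symm.re_inner_mul_apply, ← Module.End.mul_apply,
    ← (hdb.mul hdb.symm).re_inner_mul_apply, ← pow_two]
  simp

theorem norm_pow_four_apply_sq_sub (hdb : IsFormalAdjoint T d b)
    (h : b * d = d * b + (k : ℂ) • 1) (f : V) :
    ‖T ((d ^ 4) f)‖ ^ 2 - ‖T ((b ^ 4) f)‖ ^ 2 = 16 * k * ‖T (b (d (b f)))‖ ^ 2
      + 24 * k ^ 2 * ‖T (d (b f))‖ ^ 2 + 56 * k ^ 3 * ‖T (b f)‖ ^ 2 + 24 * k ^ 4 * ‖T f‖ ^ 2 := by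
  have hcube : d * b * d * (b * (d * b)) = (d * b) ^ 3 := by
    simp only [pow_succ, pow_zero, one_mul, mul_assoc]
  rw [← (hdb.pow 4).re_inner_mul_apply, ← (hdb.symm.pow 4).re_inner_mul_apply,
    ← Complex.sub_re, ← inner_sub_right, ← map_sub, ← LinearMap.sub_apply,
    pow_four_mul_pow_four_sub h, ← Module.End.mul_apply d b, ← Module.End.mul_apply b (d * b),
    ← hdb.symm.re_inner_mul_apply f, ← (hdb.mul hdb.symm).re_inner_mul_apply f, ← pow_two,
    ← (hdb.symm.mul (hdb.mul hdb.symm)).re_inner_mul_apply f, hcube]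
  simp [inner_add_right, inner_smul_right, inner_self_eq_norm_sq_to_K, ← Complex.ofReal_pow]

theorem norm_pow_two_apply_le (hdb : IsFormalAdjoint T d b) (h : b * d = d * b + (k : ℂ) • 1)
    (hk : 0 ≤ k) (f : V) : ‖T ((b ^ 2) f)‖ ≤ ‖T ((d ^ 2) f)‖ := by
  rw [← sq_le_sq₀ (norm_nonneg _) (norm_nonneg _), hdb.norm_pow_two_apply_sq h,
    hdb.norm_pow_two_apply_sq' h]
  nlinarith [mul_nonneg hk (sq_nonneg ‖T (b f)‖), mul_nonneg (sq_nonneg k) (sq_nonneg ‖T f‖)]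

theorem norm_pow_four_commutator_ge (hdb : IsFormalAdjoint T d b)
    (h : b * d = d * b + (k : ℂ) • 1) (hk : 0 ≤ k) (f : V) :
    16 * k * ‖T (b (d (b f)))‖ ^ 2 ≤ ‖T ((d ^ 4) f)‖ ^ 2 - ‖T ((b ^ 4) f)‖ ^ 2 := by
  rw [hdb.norm_pow_four_apply_sq_sub h, add_assoc, add_assoc]
  exact le_add_of_nonneg_right (by positivity)

theorem norm_sum_apply_sq_sub {ι : Type*} {D B : ι → Module.End ℂ V} (s : Finset ι)
    (hDB : ∀ j, IsFormalAdjoint T (D j) (B j)) (hcomm : ∀ j l, j ≠ l → Commute (B j) (D l))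
    (f : V) : ‖T ((∑ j ∈ s, D j) f)‖ ^ 2 - ‖T ((∑ j ∈ s, B j) f)‖ ^ 2 =
      ∑ j ∈ s, (‖T (D j f)‖ ^ 2 - ‖T (B j f)‖ ^ 2) := by
  have hsum := IsFormalAdjoint.sum s hDB
  rw [← hsum.re_inner_mul_apply, ← hsum.symm.re_inner_mul_apply, ← Complex.sub_re,
    ← inner_sub_right, ← map_sub, ← LinearMap.sub_apply, sum_mul_sum_sub_of_commute s hcomm]
  simp only [← (hDB _).re_inner_mul_apply, ← (hDB _).symm.re_inner_mul_apply, ← Complex.sub_re,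
    ← inner_sub_right, ← map_sub, ← LinearMap.sub_apply, LinearMap.sum_apply, map_sum, inner_sum,
    Complex.re_sum]

theorem norm_apply_lowering_sq_le_interpolation (hdb : IsFormalAdjoint T d b) {t : ℝ} (ht : 0 < t)
    (f : V) :
    ‖T (d (b f))‖ ^ 2 ≤ t ^ 2 * ‖T f‖ ^ 2 + ‖T (b (d (b f)))‖ ^ 2 / t := by
  have hxy : ‖T (b f)‖ ^ 2 ≤ (t * ‖T f‖ ^ 2 + ‖T (d (b f))‖ ^ 2 / t) / 2 :=
    (hdb.symm.norm_apply_sq_le f).trans (mul_le_add_div ht _ _)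
  have hyz : ‖T (d (b f))‖ ^ 2 ≤ (t * ‖T (b f)‖ ^ 2 + ‖T (b (d (b f)))‖ ^ 2 / t) / 2 :=
    (hdb.norm_apply_sq_le (b f)).trans (mul_le_add_div ht _ _)
  have hcancel : t * (‖T (d (b f))‖ ^ 2 / t) = ‖T (d (b f))‖ ^ 2 := mul_div_cancel₀ _ ht.ne'
  nlinarith [mul_le_mul_of_nonneg_left hxy ht.le, mul_nonneg (sq_nonneg t) (sq_nonneg ‖T f‖)]

theorem norm_lowering_sq_le (hdb : IsFormalAdjoint T d b) (f : V) :
    ‖T (b f)‖ ^ 2 ≤ (‖T f‖ ^ 2 + ‖T (d (b f))‖ ^ 2) / 2 := by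
  nlinarith [hdb.symm.norm_apply_sq_le f, sq_nonneg (‖T f‖ - ‖T (d (b f))‖)]

theorem norm_apply_sq_le_of_le (hdb : IsFormalAdjoint T d b)
    (h : b * d = d * b + (k : ℂ) • 1) {t : ℝ} (ht : 0 < t) (ht1 : t ≤ 1) (hkt : k ≤ t ^ 2) (f : V) :
    ‖T (d f)‖ ^ 2 ≤ 2 * ‖T f‖ ^ 2 + ‖T (b (d (b f)))‖ ^ 2 / t := by
  have ht2 : t ^ 2 ≤ 1 := pow_le_one₀ ht.le ht1
  have hz : 0 ≤ ‖T (b (d (b f)))‖ ^ 2 / t := by positivity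
  rw [hdb.norm_apply_sq h]
  nlinarith [hdb.norm_apply_lowering_sq_le_interpolation ht f, hdb.norm_lowering_sq_le f,
    mul_le_mul_of_nonneg_right ht2 (sq_nonneg ‖T f‖),
    mul_le_mul_of_nonneg_right hkt (sq_nonneg ‖T f‖)]

theorem norm_pow_two_apply_sq_le_of_le (hdb : IsFormalAdjoint T d b)
    (h : b * d = d * b + (k : ℂ) • 1) {t : ℝ} (ht : 0 < t) (ht1 : t ≤ 1) (hk : 0 ≤ k)
    (hkt : k ≤ t ^ 2) (f : V) :
    ‖T ((d ^ 2) f)‖ ^ 2 ≤ 6 * t ^ 2 * ‖T f‖ ^ 2 + 3 * ‖T (b (d (b f)))‖ ^ 2 / t := by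
  have ht2 : t ^ 2 ≤ 1 := pow_le_one₀ ht.le ht1
  have hk2 : k ^ 2 ≤ t ^ 2 := by nlinarith
  have hx : k * ‖T (b f)‖ ^ 2 ≤ (t ^ 2 * ‖T f‖ ^ 2 + ‖T (d (b f))‖ ^ 2) / 2 := by
    nlinarith [mul_le_mul hkt (hdb.norm_lowering_sq_le f) (by positivity) (by positivity),
      mul_le_mul_of_nonneg_right ht2 (sq_nonneg ‖T (d (b f))‖)]
  have hz : 0 ≤ ‖T (b (d (b f)))‖ ^ 2 / t := by positivity
  rw [hdb.norm_pow_two_apply_sq h, mul_div_assoc]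
  nlinarith [hdb.norm_apply_lowering_sq_le_interpolation ht f,
    mul_le_mul_of_nonneg_right hk2 (sq_nonneg ‖T f‖)]

end IsFormalAdjoint

end FormalAdjoint

theorem sum_le_card_mul_add_sum_div {ι : Type*} [Fintype ι] {s : Finset ι} {y z : ι → ℝ} {c t : ℝ}
    (hc : 0 ≤ c) (h : ∀ j ∈ s, y j ≤ c + z j / t) :
    ∑ j ∈ s, y j ≤ Fintype.card ι * c + (∑ j ∈ s, z j) / t :=
  calc ∑ j ∈ s, y j ≤ ∑ j ∈ s, (c + z j / t) := Finset.sum_le_sum h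
    _ = s.card * c + (∑ j ∈ s, z j) / t := by
        rw [Finset.sum_add_distrib, Finset.sum_const, nsmul_eq_mul, ← Finset.sum_div]
    _ ≤ Fintype.card ι * c + (∑ j ∈ s, z j) / t := by
        gcongr
        exact Finset.card_le_univ s

section LadderSystem

variable {ι V H : Type*} [AddCommGroup V] [Module ℂ V] [NormedAddCommGroup H]
  [InnerProductSpace ℂ H] {T : V →ₗ[ℂ] H} {d b : ι → Module.End ℂ V} {i₀ : ι} {k s : ℝ}

/-- The algebra of the conjugated derivatives `d j = e^{φ/h} h∂ⱼ e^{-φ/h}` and of their formal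
adjoints `b j`, for a weight `φ` that is linear in the direction `i₀` and quadratic in the others:
`b i₀` and `d i₀` commute and are bounded below by `s`, while for `j ≠ i₀` the pair `b j`, `d j`
satisfies the commutation relation of annihilation and creation operators with constant `k`. -/
structure IsLadderSystem (T : V →ₗ[ℂ] H) (d b : ι → Module.End ℂ V) (i₀ : ι) (k s : ℝ) :
    Prop where
  adjoint : ∀ j, IsFormalAdjoint T (d j) (b j)
  commute : ∀ j l, j ≠ l → Commute (b j) (d l)
  commute_lowering : ∀ j, Commute (b i₀) (b j)
  normal : Commute (b i₀) (d i₀)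
  ladder : ∀ j, j ≠ i₀ → b j * d j = d j * b j + (k : ℂ) • 1
  surjective : Function.Surjective (b i₀)
  le_norm : ∀ f, s * ‖T f‖ ≤ ‖T (d i₀ f)‖

namespace IsLadderSystem

theorem norm_base_pow_two_apply (hL : IsLadderSystem T d b i₀ k s) (f : V) :
    ‖T ((d i₀ ^ 2) f)‖ = ‖T ((b i₀ ^ 2) f)‖ :=
  ((hL.adjoint i₀).pow 2).norm_apply_eq_of_commute (hL.normal.pow_pow 2 2) f

theorem commute_base (hL : IsLadderSystem T d b i₀ k s) (j : ι) : Commute (b j) (d i₀) := by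
  obtain rfl | hj := eq_or_ne j i₀
  exacts [hL.normal, hL.commute j i₀ hj]

theorem pow_mul_norm_sq_le (hL : IsLadderSystem T d b i₀ k s) (hs : 0 ≤ s) (f : V) :
    s ^ 2 * ‖T (d i₀ f)‖ ^ 2 ≤ ‖T ((d i₀ ^ 2) f)‖ ^ 2 ∧
      s ^ 4 * ‖T f‖ ^ 2 ≤ ‖T ((d i₀ ^ 2) f)‖ ^ 2 := by
  have hstep g : s ^ 2 * ‖T g‖ ^ 2 ≤ ‖T (d i₀ g)‖ ^ 2 := by
    rw [← mul_pow]
    exact pow_le_pow_left₀ (by positivity) (hL.le_norm g) 2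
  rw [pow_two (d i₀), Module.End.mul_apply]
  refine ⟨hstep _, ?_⟩
  calc s ^ 4 * ‖T f‖ ^ 2 = s ^ 2 * (s ^ 2 * ‖T f‖ ^ 2) := by ring
    _ ≤ s ^ 2 * ‖T (d i₀ f)‖ ^ 2 := mul_le_mul_of_nonneg_left (hstep f) (sq_nonneg s)
    _ ≤ ‖T (d i₀ (d i₀ f))‖ ^ 2 := hstep _

theorem inner_base_pow_two (hL : IsLadderSystem T d b i₀ k s) (j : ι) (f g : V) :
    inner ℂ (T ((d i₀ ^ 2) f)) (T ((d j ^ 4) g)) =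
      inner ℂ (T ((d i₀ ^ 2) ((b j ^ 2) f))) (T ((d j ^ 2) g)) := by
  rw [← Module.End.mul_apply (d i₀ ^ 2), ← ((hL.commute_base j).pow_pow 2 2).eq,
    Module.End.mul_apply, ((hL.adjoint j).symm.pow 2) _ _, ← Module.End.mul_apply, ← pow_add]

theorem norm_inner_base_pow_two_le (hL : IsLadderSystem T d b i₀ k s) (hk : 0 ≤ k) {j : ι}
    (hj : j ≠ i₀) (f : V) :
    ‖(inner ℂ (T ((d i₀ ^ 2) f)) (T ((d j ^ 4) ((b i₀ ^ 2) f))) : ℂ)‖ ≤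
      ‖T ((d j ^ 2) ((b i₀ ^ 2) f))‖ ^ 2 := by
  rw [hL.inner_base_pow_two]
  refine (norm_inner_le_norm _ _).trans ?_
  rw [hL.norm_base_pow_two_apply, ← Module.End.mul_apply (b i₀ ^ 2),
    ((hL.commute_lowering j).pow_pow 2 2).eq, Module.End.mul_apply, pow_two ‖_‖]
  exact mul_le_mul_of_nonneg_right
    ((hL.adjoint j).norm_pow_two_apply_le (hL.ladder j hj) hk _) (norm_nonneg _)

variable [Fintype ι]

theorem mul_sum_norm_sq_le [DecidableEq ι] (hL : IsLadderSystem T d b i₀ k s) (hk : 0 ≤ k) (f : V) :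
    16 * k * ∑ j ∈ Finset.univ.erase i₀, ‖T (b j (d j (b j f)))‖ ^ 2 ≤
      ‖T ((∑ j, d j ^ 4) f)‖ ^ 2 := by
  have hadj j : IsFormalAdjoint T (d j ^ 4) (b j ^ 4) := (hL.adjoint j).pow 4
  have hnormal : ‖T ((d i₀ ^ 4) f)‖ = ‖T ((b i₀ ^ 4) f)‖ :=
    (hadj i₀).norm_apply_eq_of_commute (hL.normal.pow_pow 4 4) f
  calc 16 * k * ∑ j ∈ Finset.univ.erase i₀, ‖T (b j (d j (b j f)))‖ ^ 2
      ≤ ∑ j ∈ Finset.univ.erase i₀, (‖T ((d j ^ 4) f)‖ ^ 2 - ‖T ((b j ^ 4) f)‖ ^ 2) := by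
        rw [Finset.mul_sum]
        exact Finset.sum_le_sum fun j hj => (hL.adjoint j).norm_pow_four_commutator_ge
          (hL.ladder j (Finset.ne_of_mem_erase hj)) hk f
    _ = ∑ j, (‖T ((d j ^ 4) f)‖ ^ 2 - ‖T ((b j ^ 4) f)‖ ^ 2) :=
        Finset.sum_erase _ (by rw [hnormal, sub_self])
    _ = ‖T ((∑ j, d j ^ 4) f)‖ ^ 2 - ‖T ((∑ j, b j ^ 4) f)‖ ^ 2 :=
        (IsFormalAdjoint.norm_sum_apply_sq_sub _ hadj
          (fun j l hjl => (hL.commute j l hjl).pow_pow 4 4) f).symm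
    _ ≤ ‖T ((∑ j, d j ^ 4) f)‖ ^ 2 := sub_le_self _ (sq_nonneg _)

theorem norm_base_pow_two_sq_le [DecidableEq ι] (hL : IsLadderSystem T d b i₀ k s) (hk : 0 ≤ k)
    (f : V) :
    ‖T ((d i₀ ^ 2) f)‖ ^ 2 ≤ ‖T f‖ * ‖T ((∑ j, d j ^ 4) f)‖ +
      ∑ j ∈ Finset.univ.erase i₀, ‖T ((d j ^ 2) f)‖ ^ 2 := by
  -- Pairing `∑ j, d j ^ 4` with `d i₀ ^ 2` of a solution `v` of `b i₀ ^ 2 v = f` isolates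
  -- `‖d i₀ ^ 2 f‖²`, the one term that the commutators do not control.
  obtain ⟨v, rfl⟩ : ∃ v, (b i₀ ^ 2) v = f := by
    rw [pow_two]
    exact hL.surjective.comp hL.surjective f
  set f := (b i₀ ^ 2) v
  let F (j : ι) : ℂ := inner ℂ (T ((d i₀ ^ 2) v)) (T ((d j ^ 4) f))
  have hbase : F i₀ = (‖T ((d i₀ ^ 2) f)‖ : ℂ) ^ 2 := by
    simp only [F, hL.inner_base_pow_two i₀]
    exact inner_self_eq_norm_sq_to_K _
  have hsplit : F i₀ = inner ℂ (T ((d i₀ ^ 2) v)) (T ((∑ j, d j ^ 4) f)) -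
      ∑ j ∈ Finset.univ.erase i₀, F j := by
    rw [Finset.sum_erase_eq_sub (Finset.mem_univ i₀), LinearMap.sum_apply, map_sum, inner_sum]
    ring
  calc ‖T ((d i₀ ^ 2) f)‖ ^ 2 = ‖F i₀‖ := by rw [hbase]; simp
    _ ≤ ‖(inner ℂ (T ((d i₀ ^ 2) v)) (T ((∑ j, d j ^ 4) f)) : ℂ)‖ +
        ∑ j ∈ Finset.univ.erase i₀, ‖F j‖ := by
      rw [hsplit]
      exact (norm_sub_le _ _).trans (add_le_add_right (norm_sum_le _ _) _)
    _ ≤ _ := by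
      refine add_le_add ?_ (Finset.sum_le_sum fun j hj =>
        hL.norm_inner_base_pow_two_le hk (Finset.ne_of_mem_erase hj) v)
      rw [← hL.norm_base_pow_two_apply v]
      exact norm_inner_le_norm _ _

theorem mul_norm_base_pow_two_sq_le (hL : IsLadderSystem T d b i₀ k s) {t : ℝ} (hs : 0 < s)
    (hk : 0 ≤ k) (ht : 0 < t) (ht1 : t ≤ 1) (hkt : k ≤ t ^ 2)
    (hts : 24 * Fintype.card ι * t ^ 2 ≤ s ^ 4) (f : V) :
    k * ‖T ((d i₀ ^ 2) f)‖ ^ 2 ≤ ‖T ((∑ j, d j ^ 4) f)‖ ^ 2 / t := by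
  classical
  set P := ‖T ((∑ j, d j ^ 4) f)‖
  set S := ‖T ((d i₀ ^ 2) f)‖ ^ 2
  set Z := ∑ j ∈ Finset.univ.erase i₀, ‖T (b j (d j (b j f)))‖ ^ 2
  have hcard : (1 : ℝ) ≤ Fintype.card ι := mod_cast Fintype.card_pos_iff.2 ⟨i₀⟩
  have hsum : ∑ j ∈ Finset.univ.erase i₀, ‖T ((d j ^ 2) f)‖ ^ 2 ≤
      Fintype.card ι * (6 * t ^ 2 * ‖T f‖ ^ 2) + 3 * Z / t := by
    rw [Finset.mul_sum]
    exact sum_le_card_mul_add_sum_div (by positivity) fun j hj =>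
      (hL.adjoint j).norm_pow_two_apply_sq_le_of_le
        (hL.ladder j (Finset.ne_of_mem_erase hj)) ht ht1 hk hkt f
  have hsmall : Fintype.card ι * (6 * t ^ 2 * ‖T f‖ ^ 2) ≤ S / 4 := by
    nlinarith [(hL.pow_mul_norm_sq_le hs.le f).2, mul_le_mul_of_nonneg_right hts (sq_nonneg ‖T f‖)]
  have hS : S ≤ 2 * (P ^ 2 / s ^ 4) + 12 * Z / t := by
    rw [mul_div_assoc] at hsum ⊢
    linarith [hL.norm_base_pow_two_sq_le hk f, mul_le_add_div (pow_pos hs 4) ‖T f‖ P,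
      (hL.pow_mul_norm_sq_le hs.le f).2]
  have hks : k / s ^ 4 ≤ 1 / 24 := by
    rw [div_le_iff₀ (by positivity)]
    nlinarith [sq_nonneg t]
  have hPt : P ^ 2 ≤ P ^ 2 / t := le_div_self (sq_nonneg _) ht ht1
  calc k * S ≤ k * (2 * (P ^ 2 / s ^ 4) + 12 * Z / t) := mul_le_mul_of_nonneg_left hS hk
    _ = 2 * (k / s ^ 4) * P ^ 2 + 3 / 4 * (16 * k * Z / t) := by ring
    _ ≤ 2 * (1 / 24) * P ^ 2 + 3 / 4 * (P ^ 2 / t) := by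
        gcongr
        exact hL.mul_sum_norm_sq_le hk f
    _ ≤ P ^ 2 / t := by linarith [sq_nonneg P]

theorem mul_norm_sq_add_sum_le (hL : IsLadderSystem T d b i₀ k s) {t : ℝ} (hs : 0 < s)
    (hk : 0 ≤ k) (ht : 0 < t) (ht1 : t ≤ 1) (hkt : k ≤ t ^ 2)
    (hts : 24 * Fintype.card ι * t ^ 2 ≤ s ^ 4) (f : V) :
    k * (‖T f‖ ^ 2 + ∑ j, ‖T (d j f)‖ ^ 2) ≤
      ((2 * Fintype.card ι + 1) / s ^ 4 + 1 / s ^ 2 + 1) / t * ‖T ((∑ j, d j ^ 4) f)‖ ^ 2 := by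
  classical
  set P := ‖T ((∑ j, d j ^ 4) f)‖
  set S := ‖T ((d i₀ ^ 2) f)‖ ^ 2
  set Z := ∑ j ∈ Finset.univ.erase i₀, ‖T (b j (d j (b j f)))‖ ^ 2
  have hf : ‖T f‖ ^ 2 ≤ S / s ^ 4 := by
    rw [le_div_iff₀' (by positivity)]
    exact (hL.pow_mul_norm_sq_le hs.le f).2
  have hbase : ‖T (d i₀ f)‖ ^ 2 ≤ S / s ^ 2 := by
    rw [le_div_iff₀' (by positivity)]
    exact (hL.pow_mul_norm_sq_le hs.le f).1
  have hsum : ∑ j ∈ Finset.univ.erase i₀, ‖T (d j f)‖ ^ 2 ≤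
      Fintype.card ι * (2 * ‖T f‖ ^ 2) + Z / t :=
    sum_le_card_mul_add_sum_div (by positivity) fun j hj => (hL.adjoint j).norm_apply_sq_le_of_le
      (hL.ladder j (Finset.ne_of_mem_erase hj)) ht ht1 hkt f
  have hZ : k * Z ≤ P ^ 2 := by
    have hkZ : 0 ≤ k * Z := by positivity
    linarith [hL.mul_sum_norm_sq_le hk f, hkZ]
  calc k * (‖T f‖ ^ 2 + ∑ j, ‖T (d j f)‖ ^ 2)
      = k * ((1 : ℝ) * ‖T f‖ ^ 2 + ‖T (d i₀ f)‖ ^ 2 +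
          ∑ j ∈ Finset.univ.erase i₀, ‖T (d j f)‖ ^ 2) := by
        rw [← Finset.add_sum_erase _ _ (Finset.mem_univ i₀), one_mul, add_assoc]
    _ ≤ k * (1 * (S / s ^ 4) + S / s ^ 2 +
          (Fintype.card ι * (2 * (S / s ^ 4)) + Z / t)) := by
        gcongr
        exact hsum.trans (by gcongr)
    _ = ((2 * Fintype.card ι + 1) / s ^ 4 + 1 / s ^ 2) * (k * S) + k * Z / t := by ring
    _ ≤ ((2 * Fintype.card ι + 1) / s ^ 4 + 1 / s ^ 2) * (P ^ 2 / t) + P ^ 2 / t := by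
        gcongr
        exact hL.mul_norm_base_pow_two_sq_le hs hk ht ht1 hkt hts f
    _ = ((2 * Fintype.card ι + 1) / s ^ 4 + 1 / s ^ 2 + 1) / t * P ^ 2 := by ring

end IsLadderSystem

theorem exists_subelliptic_estimate [Fintype ι] (T : V →ₗ[ℂ] H) (i₀ : ι) (hs : 0 < s) :
    ∃ k₀ > 0, ∃ C > 0, ∀ k, 0 ≤ k → k ≤ k₀ → ∀ d b : ι → Module.End ℂ V,
      IsLadderSystem T d b i₀ k s → ∀ f,
        k * (‖T f‖ ^ 2 + ∑ j, ‖T (d j f)‖ ^ 2) ≤ C * ‖T ((∑ j, d j ^ 4) f)‖ ^ 2 := by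
  have hcard : (0 : ℝ) < Fintype.card ι := mod_cast Fintype.card_pos_iff.2 ⟨i₀⟩
  obtain ⟨t, ht, ht1, hts⟩ : ∃ t : ℝ, 0 < t ∧ t ≤ 1 ∧ 24 * Fintype.card ι * t ^ 2 ≤ s ^ 4 := by
    have hr : 0 < s ^ 4 / (24 * Fintype.card ι) := by positivity
    refine ⟨min 1 (s ^ 4 / (24 * Fintype.card ι)), lt_min one_pos hr, min_le_left _ _, ?_⟩
    rw [← le_div_iff₀' (by positivity), pow_two]
    exact (mul_le_of_le_one_left (by positivity) (min_le_left _ _)).trans (min_le_right _ _)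
  exact ⟨t ^ 2, by positivity, _, by positivity, fun k hk hkt d b hL f =>
    hL.mul_norm_sq_add_sum_le hs hk ht ht1 hkt hts f⟩

end LadderSystem

open SchwartzMap FourierTransform LineDeriv

section ConjDeriv

variable {E : Type*} [NormedAddCommGroup E] [NormedSpace ℝ E]

theorem lineDerivOp_comm (v v' : E) (f : 𝓢(E, ℂ)) : ∂_{v} (∂_{v'} f) = ∂_{v'} (∂_{v} f) := by
  ext x
  have hdiff : DifferentiableAt ℝ (fderiv ℝ f) x :=
    ((f.smooth 2).fderiv_right (m := 1) le_rfl).differentiable one_ne_zero x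
  have hswap (u u' : E) : (∂_{u} (∂_{u'} f)) x = fderiv ℝ (fderiv ℝ f) x u u' := by
    rw [lineDerivOp_apply_eq_fderiv, funext fun y => lineDerivOp_apply_eq_fderiv u' f y,
      fderiv_clm_apply hdiff (differentiableAt_const u')]
    simp
  rw [hswap, hswap, second_derivative_symmetric (fun y => f.hasFDerivAt y) hdiff.hasFDerivAt]

/-- The conjugated derivative `e^{φ/h} h∂ᵥ e^{-φ/h} = h∂ᵥ - a` on Schwartz functions, where
`a = ∂ᵥφ` has temperate growth. -/
def conjDeriv (h : ℝ) (v : E) (a : E → ℝ) : Module.End ℂ 𝓢(E, ℂ) :=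
  (h : ℂ) • (lineDerivOpCLM ℂ 𝓢(E, ℂ) v).toLinearMap -
    (smulLeftCLM ℂ fun x => (a x : ℂ)).toLinearMap

variable {a a' : E → ℝ}

theorem conjDeriv_apply (ha : a.HasTemperateGrowth) (h : ℝ) (v : E) (f : 𝓢(E, ℂ)) (x : E) :
    conjDeriv h v a f x = h * fderiv ℝ f x v - a x * f x := by
  have haC : (fun x => (a x : ℂ)).HasTemperateGrowth := by fun_prop
  simp [conjDeriv, lineDerivOp_apply_eq_fderiv, smulLeftCLM_apply_apply haC]

theorem fderiv_conjDeriv (ha : a.HasTemperateGrowth) (h : ℝ) (v v' : E) (f : 𝓢(E, ℂ)) (x : E) :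
    fderiv ℝ (conjDeriv h v a f) x v' =
      h * (∂_{v'} (∂_{v} f)) x - (fderiv ℝ a x v' * f x + a x * fderiv ℝ f x v') := by
  have haC : HasFDerivAt (fun x => (a x : ℂ)) (Complex.ofRealCLM ∘L fderiv ℝ a x) x :=
    Complex.ofRealCLM.hasFDerivAt.comp x (ha.1.differentiable (by simp) x).hasFDerivAt
  have heq : ⇑(conjDeriv h v a f) = fun x => h * (∂_{v} f) x - a x * f x := by
    ext x
    rw [conjDeriv_apply ha, lineDerivOp_apply_eq_fderiv]
  have hderiv :=
    (((∂_{v} f).hasFDerivAt x).const_mul (h : ℂ)).fun_sub (haC.fun_mul (f.hasFDerivAt x))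
  rw [heq, hderiv.fderiv]
  simp [lineDerivOp_apply_eq_fderiv]
  ring

theorem conjDeriv_mul_conjDeriv (ha : a.HasTemperateGrowth) (ha' : a'.HasTemperateGrowth)
    {v v' : E} {c c' : ℝ} (hc : ∀ x, fderiv ℝ a x v' = c) (hc' : ∀ x, fderiv ℝ a' x v = c')
    (h h' : ℝ) :
    conjDeriv h v a * conjDeriv h' v' a' =
      conjDeriv h' v' a' * conjDeriv h v a + ((h' * c - h * c' : ℝ) : ℂ) • 1 := by
  ext f x
  simp only [Module.End.mul_apply, LinearMap.add_apply, LinearMap.smul_apply,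
    Module.End.one_apply, _root_.add_apply, _root_.smul_apply, smul_eq_mul, conjDeriv_apply ha,
    conjDeriv_apply ha', fderiv_conjDeriv ha, fderiv_conjDeriv ha', hc, hc', lineDerivOp_comm v v']
  push_cast
  ring

theorem tsupport_conjDeriv_subset (ha : a.HasTemperateGrowth) (h : ℝ) (v : E) (f : 𝓢(E, ℂ)) :
    tsupport (conjDeriv h v a f) ⊆ tsupport f := by
  refine closure_minimal (fun x hx => ?_) (isClosed_tsupport f)
  contrapose! hx
  simp [conjDeriv_apply ha, fderiv_of_notMem_tsupport ℝ hx, image_eq_zero_of_notMem_tsupport hx]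

theorem tsupport_conjDeriv_pow_subset (ha : a.HasTemperateGrowth) (h : ℝ) (v : E) (m : ℕ)
    (f : 𝓢(E, ℂ)) : tsupport ((conjDeriv h v a ^ m) f) ⊆ tsupport f := by
  induction m with
  | zero => simp
  | succ m ih =>
    rw [pow_succ', Module.End.mul_apply]
    exact (tsupport_conjDeriv_subset ha h v _).trans ih

theorem hasTemperateGrowth_inv_I_sub {c : ℝ} (hc : c ≠ 0) {ℓ : E → ℝ} (hℓ : ℓ.HasTemperateGrowth) :
    (fun ξ => (ℓ ξ : ℂ) * Complex.I - c)⁻¹.HasTemperateGrowth := by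
  have hbracket : (fun ξ => (1 + ‖c⁻¹ * ℓ ξ‖ ^ 2) ^ (-1 : ℝ)).HasTemperateGrowth :=
    (Function.hasTemperateGrowth_one_add_norm_sq_rpow ℝ (-1)).comp (by fun_prop)
  have hinv : (fun ξ => (ℓ ξ : ℂ) * Complex.I - c)⁻¹ = fun ξ =>
      -(c : ℂ)⁻¹ ^ 2 * (c + ℓ ξ * Complex.I) *
        (((1 + ‖c⁻¹ * ℓ ξ‖ ^ 2) ^ (-1 : ℝ) : ℝ) : ℂ) := by
    ext ξ
    have hpos : 0 < c ^ 2 + ℓ ξ ^ 2 := by positivity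
    have hne : (c : ℂ) ^ 2 + (ℓ ξ : ℂ) ^ 2 ≠ 0 := mod_cast hpos.ne'
    have hcC : (c : ℂ) ≠ 0 := mod_cast hc
    rw [Pi.inv_apply, rpow_neg_one, norm_eq_abs, sq_abs]
    refine inv_eq_of_mul_eq_one_right ?_
    push_cast
    field_simp
    linear_combination -(ℓ ξ : ℂ) ^ 2 * Complex.I_sq
  rw [hinv]
  fun_prop

end ConjDeriv

section L2

variable {E : Type*} [NormedAddCommGroup E] [InnerProductSpace ℝ E] [FiniteDimensional ℝ E]
  [MeasurableSpace E] [BorelSpace E]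

/-- The embedding of the Schwartz functions into `L²(E)`, as a linear map. -/
def toL2 (E : Type*) [NormedAddCommGroup E] [InnerProductSpace ℝ E] [FiniteDimensional ℝ E]
    [MeasurableSpace E] [BorelSpace E] : 𝓢(E, ℂ) →ₗ[ℂ] Lp ℂ 2 (volume : Measure E) :=
  (toLpCLM ℂ ℂ 2 volume).toLinearMap

theorem inner_toL2 (f g : 𝓢(E, ℂ)) :
    inner ℂ (toL2 E f) (toL2 E g) = ∫ x, inner ℂ (f x) (g x) := by
  simp [toL2]

theorem integrable_norm_sq (f : 𝓢(E, ℂ)) : Integrable (fun x => ‖f x‖ ^ 2) := by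
  simpa using (f.memLp 2 volume).integrable_norm_pow two_ne_zero

theorem norm_toL2_sq (f : 𝓢(E, ℂ)) : ‖toL2 E f‖ ^ 2 = ∫ x, ‖f x‖ ^ 2 := by
  rw [← inner_self_eq_norm_sq (𝕜 := ℂ), inner_toL2, ← integral_re]
  · simp [inner_self_eq_norm_sq_to_K, ← Complex.ofReal_pow]
  · simp only [inner_self_eq_norm_sq_to_K]
    exact mod_cast (integrable_norm_sq f).ofReal

variable {a : E → ℝ}

theorem inner_toL2_lineDerivOp (v : E) (f g : 𝓢(E, ℂ)) :
    inner ℂ (toL2 E (∂_{v} f)) (toL2 E g) = -inner ℂ (toL2 E f) (toL2 E (∂_{v} g)) := by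
  have hparts := integral_bilinear_lineDerivOp_right_eq_neg_left (μ := volume) f g
    ((ContinuousLinearMap.mul ℝ ℂ).comp Complex.conjCLE.toContinuousLinearMap) v
  simp only [inner_toL2]
  simpa [mul_comm, neg_eq_iff_eq_neg, eq_comm] using hparts

theorem inner_toL2_smulLeftCLM (ha : a.HasTemperateGrowth) (f g : 𝓢(E, ℂ)) :
    inner ℂ (toL2 E (smulLeftCLM ℂ (fun x => (a x : ℂ)) f)) (toL2 E g) =
      inner ℂ (toL2 E f) (toL2 E (smulLeftCLM ℂ (fun x => (a x : ℂ)) g)) := by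
  have haC : (fun x => (a x : ℂ)).HasTemperateGrowth := by fun_prop
  simp only [inner_toL2, smulLeftCLM_apply_apply haC, smul_eq_mul]
  congr with x
  simp
  ring

theorem isFormalAdjoint_conjDeriv (ha : a.HasTemperateGrowth) (h : ℝ) (v : E) :
    IsFormalAdjoint (toL2 E) (conjDeriv h v a) (conjDeriv (-h) v a) := fun f g => by
  simp only [conjDeriv, LinearMap.sub_apply, LinearMap.smul_apply, ContinuousLinearMap.coe_coe,
    lineDerivOpCLM_apply, map_sub, map_smul, inner_sub_left, inner_sub_right, inner_smul_left,
    inner_smul_right, inner_toL2_lineDerivOp, inner_toL2_smulLeftCLM ha, Complex.conj_ofReal,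
    Complex.ofReal_neg, neg_mul, mul_neg]

theorem fourierMultiplierCLM_surjective {p : E → ℂ} (hp : p.HasTemperateGrowth)
    (hpinv : p⁻¹.HasTemperateGrowth) (hp0 : ∀ ξ, p ξ ≠ 0) :
    Function.Surjective (fourierMultiplierCLM ℂ p : 𝓢(E, ℂ) →L[ℂ] 𝓢(E, ℂ)) := fun f => by
  refine ⟨fourierMultiplierCLM ℂ p⁻¹ f, ?_⟩
  have hmul : p * p⁻¹ = fun _ => 1 := funext fun ξ => mul_inv_cancel₀ (hp0 ξ)
  rw [fourierMultiplierCLM_fourierMultiplierCLM_apply hp hpinv, hmul]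
  simp

theorem conjDeriv_const_eq_fourierMultiplierCLM (h c : ℝ) (v : E) (f : 𝓢(E, ℂ)) :
    conjDeriv h v (fun _ => c) f = fourierMultiplierCLM ℂ
      (fun ξ => ((2 * π * h * inner ℝ ξ v : ℝ) : ℂ) * Complex.I - c) f := by
  have hinner : (fun ξ : E => inner ℝ ξ v).HasTemperateGrowth := by fun_prop
  have hsymbol : (fun ξ : E =>
      ((2 * π * h * inner ℝ ξ v : ℝ) : ℂ) * Complex.I - c).HasTemperateGrowth := by fun_prop
  suffices hfourier : 𝓕 (conjDeriv h v (fun _ => c) f) = smulLeftCLM ℂ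
      (fun ξ => ((2 * π * h * inner ℝ ξ v : ℝ) : ℂ) * Complex.I - c) (𝓕 f) by
    rw [fourierMultiplierCLM_apply, ← hfourier, fourierInv_fourier_eq]
  have hconj : conjDeriv h v (fun _ => c) f = (h : ℂ) • ∂_{v} f - (c : ℂ) • f := by
    ext x
    simp [conjDeriv_apply (.const c), lineDerivOp_apply_eq_fderiv]
  rw [hconj, sub_eq_add_neg, ← neg_smul, FourierTransform.fourier_add,
    FourierTransform.fourier_smul, FourierTransform.fourier_smul, fourier_lineDerivOp_eq]
  ext ξ
  rw [smulLeftCLM_apply_apply hsymbol]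
  simp [smulLeftCLM_apply_apply hinner]
  ring

theorem conjDeriv_surjective_of_const {c : ℝ} (hc : c ≠ 0) (h : ℝ) (v : E) :
    Function.Surjective (conjDeriv h v fun _ => c) := by
  have hℓ : (fun ξ : E => 2 * π * h * inner ℝ ξ v).HasTemperateGrowth := by fun_prop
  have heq : ⇑(conjDeriv h v fun _ => c) = _ :=
    funext (conjDeriv_const_eq_fourierMultiplierCLM h c v)
  rw [heq]
  refine fourierMultiplierCLM_surjective (by fun_prop) (hasTemperateGrowth_inv_I_sub hc hℓ)
    fun ξ hξ => hc ?_
  simpa using congrArg Complex.re hξ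

end L2

variable {n : ℕ}

section Conjugation

/-- The `j`-th conjugated partial derivative `e^{φ/h} h∂ⱼ e^{-φ/h}` on Schwartz functions. -/
def conjPd (h : ℝ) (φ : EuclideanSpace ℝ (Fin n) → ℝ) (j : Fin n) :
    Module.End ℂ 𝓢(EuclideanSpace ℝ (Fin n), ℂ) :=
  conjDeriv h (EuclideanSpace.single j 1) (pdR j φ)

/-- The semiclassical `H¹` energy `‖f‖² + ∑ⱼ ‖e^{φ/h} h∂ⱼ e^{-φ/h} f‖²` associated with `φ`. -/
def conjEnergy (h : ℝ) (φ : EuclideanSpace ℝ (Fin n) → ℝ)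
    (f : 𝓢(EuclideanSpace ℝ (Fin n), ℂ)) : ℝ :=
  ‖toL2 _ f‖ ^ 2 + ∑ j, ‖toL2 _ (conjPd h φ j f)‖ ^ 2

variable {φ : EuclideanSpace ℝ (Fin n) → ℝ} {h : ℝ}

theorem pd_exp_mul (hφ : Differentiable ℝ φ) {j : Fin n} (hgrad : (pdR j φ).HasTemperateGrowth)
    (hh : h ≠ 0) (f : 𝓢(EuclideanSpace ℝ (Fin n), ℂ)) :
    pd j (fun y => (Real.exp (-(φ y) / h) : ℂ) * f y) =
      fun y => (Real.exp (-(φ y) / h) : ℂ) * (((h : ℂ)⁻¹ • conjPd h φ j f) y) := by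
  ext x
  have hexp : HasFDerivAt (fun y => ((Real.exp (-(φ y) / h) : ℝ) : ℂ)) _ x :=
    Complex.ofRealCLM.hasFDerivAt.comp x (((hφ x).hasFDerivAt.fun_neg.mul_const h⁻¹).exp)
  have hhC : (h : ℂ) ≠ 0 := mod_cast hh
  have hderiv := hexp.fun_mul (f.hasFDerivAt x)
  rw [pd, hderiv.fderiv, _root_.smul_apply, conjPd, conjDeriv_apply hgrad]
  simp [pdR]
  field_simp
  ring

theorem iterate_pd_exp_mul (hφ : Differentiable ℝ φ) {j : Fin n}
    (hgrad : (pdR j φ).HasTemperateGrowth) (hh : h ≠ 0)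
    (f : 𝓢(EuclideanSpace ℝ (Fin n), ℂ)) (m : ℕ) :
    (pd j)^[m] (fun y => (Real.exp (-(φ y) / h) : ℂ) * f y) =
      fun y => (Real.exp (-(φ y) / h) : ℂ) * (((h : ℂ)⁻¹ ^ m • (conjPd h φ j ^ m) f) y) := by
  induction m with
  | zero => simp
  | succ m ih =>
    rw [Function.iterate_succ_apply', ih, pd_exp_mul hφ hgrad hh, map_smul, smul_smul, ← pow_succ',
      ← Module.End.mul_apply, ← pow_succ']

theorem exp_mul_opL_exp_mul (hφ : Differentiable ℝ φ)
    (hgrad : ∀ j, (pdR j φ).HasTemperateGrowth) (hh : h ≠ 0)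
    (A : EuclideanSpace ℝ (Fin n) → Fin n → ℂ) (q : EuclideanSpace ℝ (Fin n) → ℂ)
    (f : 𝓢(EuclideanSpace ℝ (Fin n), ℂ)) (x : EuclideanSpace ℝ (Fin n)) :
    (Real.exp (φ x / h) : ℂ) * (h : ℂ) ^ 4 *
        opL A q (fun y => (Real.exp (-(φ y) / h) : ℂ) * f y) x =
      (∑ j, conjPd h φ j ^ 4) f x +
        (h ^ 4 * q x * f x - Complex.I * h ^ 3 * ∑ j, A x j * conjPd h φ j f x) := by
  have hhC : (h : ℂ) ≠ 0 := mod_cast hh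
  have hexp : (Real.exp (φ x / h) : ℂ) * (Real.exp (-(φ x) / h) : ℂ) = 1 := by
    rw [← Complex.ofReal_mul, ← Real.exp_add]
    simp [neg_div]
  have hprincipal : ∑ j, (pd j)^[4] (fun y => (Real.exp (-(φ y) / h) : ℂ) * f y) x =
      Real.exp (-(φ x) / h) * ((h : ℂ)⁻¹ ^ 4 * (∑ j, conjPd h φ j ^ 4) f x) := by
    simp only [iterate_pd_exp_mul hφ (hgrad _) hh, LinearMap.sum_apply, _root_.sum_apply,
      _root_.smul_apply, smul_eq_mul, Finset.mul_sum]
  have hfirst : ∑ j, A x j * pd j (fun y => (Real.exp (-(φ y) / h) : ℂ) * f y) x =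
      Real.exp (-(φ x) / h) * ((h : ℂ)⁻¹ * ∑ j, A x j * conjPd h φ j f x) := by
    simp only [pd_exp_mul hφ (hgrad _) hh, _root_.smul_apply, smul_eq_mul, Finset.mul_sum]
    exact Finset.sum_congr rfl fun j _ => by ring
  rw [opL, hprincipal, hfirst]
  set S := (∑ j, conjPd h φ j ^ 4) f x
  set F := ∑ j, A x j * conjPd h φ j f x
  calc _ = Real.exp (φ x / h) * Real.exp (-(φ x) / h) * h ^ 4 *
        ((h : ℂ)⁻¹ ^ 4 * S - Complex.I * ((h : ℂ)⁻¹ * F) + q x * f x) := by ring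
    _ = S + (h ^ 4 * q x * f x - Complex.I * h ^ 3 * F) := by
      rw [hexp]
      field_simp
      ring

end Conjugation

section QuadraticWeight

/-- The quadratic weight `σ xᵢ₀ + |x'|² - b`, where `x'` collects the coordinates of `x` other
than `xᵢ₀`. -/
def quadWeight (i₀ : Fin n) (σ b : ℝ) (x : EuclideanSpace ℝ (Fin n)) : ℝ :=
  σ * x i₀ + ∑ j ∈ Finset.univ.erase i₀, x j ^ 2 - b

variable (i₀ : Fin n) (σ b : ℝ)

theorem differentiable_quadWeight : Differentiable ℝ (quadWeight i₀ σ b) := by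
  unfold quadWeight
  fun_prop

theorem pdR_quadWeight (j : Fin n) :
    pdR j (quadWeight i₀ σ b) = fun x => if j = i₀ then σ else 2 * x j := by
  ext x
  have hcoord (l : Fin n) : HasFDerivAt (fun y : EuclideanSpace ℝ (Fin n) => y l)
      (EuclideanSpace.proj l : EuclideanSpace ℝ (Fin n) →L[ℝ] ℝ) x :=
    (EuclideanSpace.proj l : EuclideanSpace ℝ (Fin n) →L[ℝ] ℝ).hasFDerivAt
  have hderiv : HasFDerivAt (quadWeight i₀ σ b) _ x :=
    (((hcoord i₀).const_mul σ).fun_add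
      (HasFDerivAt.fun_sum fun l _ => (hcoord l).pow 2)).sub_const b
  rw [pdR, hderiv.fderiv]
  by_cases hj : j = i₀
  · subst hj
    simp +contextual
  · simp [hj, Ne.symm hj]

theorem hasTemperateGrowth_pdR_quadWeight (j : Fin n) :
    (pdR j (quadWeight i₀ σ b)).HasTemperateGrowth := by
  have hcoord : (fun x : EuclideanSpace ℝ (Fin n) => x j).HasTemperateGrowth :=
    (EuclideanSpace.proj j : EuclideanSpace ℝ (Fin n) →L[ℝ] ℝ).hasTemperateGrowth
  rw [pdR_quadWeight]
  split_ifs <;> fun_prop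

theorem fderiv_pdR_quadWeight (j l : Fin n) (x : EuclideanSpace ℝ (Fin n)) :
    fderiv ℝ (pdR j (quadWeight i₀ σ b)) x (EuclideanSpace.single l 1) =
      if l = j ∧ j ≠ i₀ then 2 else 0 := by
  rw [pdR_quadWeight]
  by_cases hj : j = i₀
  · simp [hj]
  · have hderiv : HasFDerivAt (fun y : EuclideanSpace ℝ (Fin n) => 2 * y j) _ x :=
      (EuclideanSpace.proj j : EuclideanSpace ℝ (Fin n) →L[ℝ] ℝ).hasFDerivAt.const_mul 2
    simp [hj, hderiv.fderiv, eq_comm]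

theorem isFormalAdjoint_conjPd_quadWeight (h : ℝ) (j : Fin n) :
    IsFormalAdjoint (toL2 (EuclideanSpace ℝ (Fin n))) (conjPd h (quadWeight i₀ σ b) j)
      (conjPd (-h) (quadWeight i₀ σ b) j) :=
  isFormalAdjoint_conjDeriv (hasTemperateGrowth_pdR_quadWeight i₀ σ b j) h _

theorem conjPd_quadWeight_mul (h h' : ℝ) (j l : Fin n) :
    conjPd h (quadWeight i₀ σ b) j * conjPd h' (quadWeight i₀ σ b) l =
      conjPd h' (quadWeight i₀ σ b) l * conjPd h (quadWeight i₀ σ b) j +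
        ((if l = j ∧ j ≠ i₀ then 2 * (h' - h) else 0 : ℝ) : ℂ) • 1 := by
  rw [conjPd, conjPd, conjDeriv_mul_conjDeriv (hasTemperateGrowth_pdR_quadWeight i₀ σ b j)
    (hasTemperateGrowth_pdR_quadWeight i₀ σ b l) (fderiv_pdR_quadWeight i₀ σ b j l)
    (fderiv_pdR_quadWeight i₀ σ b l j)]
  congr 3
  by_cases hlj : l = j
  · subst hlj
    split_ifs <;> ring
  · simp [hlj, Ne.symm hlj]

theorem conjPd_quadWeight_commute (h h' : ℝ) {j l : Fin n} (hjl : l = j → j = i₀) :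
    Commute (conjPd h (quadWeight i₀ σ b) j) (conjPd h' (quadWeight i₀ σ b) l) := by
  have hcond : ¬(l = j ∧ j ≠ i₀) := by tauto
  rw [Commute, SemiconjBy, conjPd_quadWeight_mul]
  simp [hcond]

theorem norm_toL2_le_norm_toL2_conjPd_quadWeight (h : ℝ)
    (f : 𝓢(EuclideanSpace ℝ (Fin n), ℂ)) :
    |σ| * ‖toL2 _ f‖ ≤ ‖toL2 _ (conjPd h (quadWeight i₀ σ b) i₀ f)‖ := by
  have hadd : conjPd h (quadWeight i₀ σ b) i₀ + conjPd (-h) (quadWeight i₀ σ b) i₀ =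
      ((-2 * σ : ℝ) : ℂ) • 1 := by
    have hgrad := hasTemperateGrowth_pdR_quadWeight i₀ σ b i₀
    ext f x
    simp only [conjPd, LinearMap.add_apply, LinearMap.smul_apply, Module.End.one_apply,
      _root_.add_apply, _root_.smul_apply, smul_eq_mul, conjDeriv_apply hgrad]
    simp [pdR_quadWeight]
    ring
  have hbound := (isFormalAdjoint_conjPd_quadWeight i₀ σ b h i₀).norm_mul_le_of_add_eq
    (conjPd_quadWeight_commute i₀ σ b (-h) h fun _ => rfl) hadd f
  simpa [mul_assoc] using hbound

theorem isLadderSystem_conjPd_quadWeight (hσ : σ ≠ 0) (h : ℝ) :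
    IsLadderSystem (toL2 (EuclideanSpace ℝ (Fin n))) (conjPd h (quadWeight i₀ σ b))
      (conjPd (-h) (quadWeight i₀ σ b)) i₀ (4 * h) |σ| where
  adjoint := isFormalAdjoint_conjPd_quadWeight i₀ σ b h
  commute j l hjl := conjPd_quadWeight_commute i₀ σ b _ _ fun hlj => absurd hlj.symm hjl
  commute_lowering j := conjPd_quadWeight_commute i₀ σ b _ _ fun _ => rfl
  normal := conjPd_quadWeight_commute i₀ σ b _ _ fun _ => rfl
  ladder j hj := by
    rw [conjPd_quadWeight_mul, if_pos ⟨rfl, hj⟩]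
    congr 3
    ring
  surjective := by
    rw [conjPd, pdR_quadWeight]
    simpa using conjDeriv_surjective_of_const hσ (-h) (EuclideanSpace.single i₀ (1 : ℝ))
  le_norm := norm_toL2_le_norm_toL2_conjPd_quadWeight i₀ σ b h

theorem exists_mul_conjEnergy_quadWeight_le (hσ : σ ≠ 0) :
    ∃ k₀ > 0, ∃ C > 0, ∀ h, 0 ≤ h → 4 * h ≤ k₀ → ∀ b (f : 𝓢(EuclideanSpace ℝ (Fin n), ℂ)),
      4 * h * conjEnergy h (quadWeight i₀ σ b) f ≤
        C * ‖toL2 _ ((∑ j, conjPd h (quadWeight i₀ σ b) j ^ 4) f)‖ ^ 2 := by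
  obtain ⟨k₀, hk₀, C, hC, hest⟩ :=
    exists_subelliptic_estimate (toL2 (EuclideanSpace ℝ (Fin n))) i₀ (abs_pos.mpr hσ)
  exact ⟨k₀, hk₀, C, hC, fun h hh hhk b f => hest _ (by positivity) hhk _ _
    (isLadderSystem_conjPd_quadWeight i₀ σ b hσ h) f⟩

end QuadraticWeight

section Perturbation

theorem integral_norm_sq_le_add {α F : Type*} [MeasurableSpace α] [NormedAddCommGroup F]
    {μ : Measure α} {p r : α → F} (hp : MemLp p 2 μ) (hr : MemLp r 2 μ) :
    ∫ x, ‖p x‖ ^ 2 ∂μ ≤ 2 * ∫ x, ‖p x + r x‖ ^ 2 ∂μ + 2 * ∫ x, ‖r x‖ ^ 2 ∂μ := by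
  have hr2 := hr.integrable_norm_pow two_ne_zero
  have hpr2 : Integrable (fun x => ‖p x + r x‖ ^ 2) μ :=
    (hp.add hr).integrable_norm_pow two_ne_zero
  rw [← integral_const_mul, ← integral_const_mul,
    ← integral_add (hpr2.const_mul 2) (hr2.const_mul 2)]
  refine integral_mono (hp.integrable_norm_pow two_ne_zero)
    ((hpr2.const_mul 2).add (hr2.const_mul 2)) fun x => ?_
  have htri : ‖p x‖ ≤ ‖p x + r x‖ + ‖r x‖ := by simpa using norm_sub_le (p x + r x) (r x)
  calc ‖p x‖ ^ 2 ≤ (‖p x + r x‖ + ‖r x‖) ^ 2 := pow_le_pow_left₀ (norm_nonneg _) htri 2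
    _ ≤ 2 * (‖p x + r x‖ ^ 2 + ‖r x‖ ^ 2) := add_sq_le
    _ = _ := mul_add ..

theorem norm_lowerOrder_sq_le {ι : Type*} [Fintype ι] {h M : ℝ} (hh₀ : 0 ≤ h) (hh₁ : h ≤ 1)
    {a u : ι → ℂ} {v w : ℂ} (ha : ‖a‖ ≤ M) (hv : ‖v‖ ≤ M) :
    ‖h ^ 4 * v * w - Complex.I * h ^ 3 * ∑ j, a j * u j‖ ^ 2 ≤
      h ^ 6 * M ^ 2 * (Fintype.card ι + 1) * (‖w‖ ^ 2 + ∑ j, ‖u j‖ ^ 2) := by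
  have hsum : ‖∑ j, a j * u j‖ ≤ M * ∑ j, ‖u j‖ := by
    rw [Finset.mul_sum]
    refine norm_sum_le_of_le _ fun j _ => ?_
    rw [norm_mul]
    exact mul_le_mul_of_nonneg_right ((norm_le_pi_norm a j).trans ha) (norm_nonneg _)
  have hnorm : ‖h ^ 4 * v * w - Complex.I * h ^ 3 * ∑ j, a j * u j‖ ≤
      h ^ 3 * M * (‖w‖ + ∑ j, ‖u j‖) := by
    calc _ ≤ ‖h ^ 4 * v * w‖ + ‖Complex.I * h ^ 3 * ∑ j, a j * u j‖ := norm_sub_le _ _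
      _ = h ^ 4 * ‖v‖ * ‖w‖ + h ^ 3 * ‖∑ j, a j * u j‖ := by simp [abs_of_nonneg hh₀]
      _ ≤ h ^ 3 * M * ‖w‖ + h ^ 3 * (M * ∑ j, ‖u j‖) := by
        have hpow : h ^ 4 * ‖v‖ ≤ h ^ 3 * M := mul_le_mul
          (pow_le_pow_of_le_one hh₀ hh₁ (by norm_num)) hv (norm_nonneg v) (by positivity)
        gcongr
      _ = _ := by ring
  have hcauchy : (‖w‖ + ∑ j, ‖u j‖) ^ 2 ≤
      (Fintype.card ι + 1) * (‖w‖ ^ 2 + ∑ j, ‖u j‖ ^ 2) := by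
    simpa [Fintype.sum_option] using sq_sum_le_card_mul_sum_sq (s := Finset.univ)
      (f := fun o : Option ι => o.elim ‖w‖ fun j => ‖u j‖)
  calc _ ≤ (h ^ 3 * M * (‖w‖ + ∑ j, ‖u j‖)) ^ 2 := pow_le_pow_left₀ (norm_nonneg _) hnorm 2
    _ = h ^ 6 * M ^ 2 * (‖w‖ + ∑ j, ‖u j‖) ^ 2 := by ring
    _ ≤ h ^ 6 * M ^ 2 * ((Fintype.card ι + 1) * (‖w‖ ^ 2 + ∑ j, ‖u j‖ ^ 2)) :=
        mul_le_mul_of_nonneg_left hcauchy (by positivity)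
    _ = _ := (mul_assoc ..).symm

theorem mul_le_of_absorption {h K C E P G : ℝ} (hh₀ : 0 ≤ h) (hh₁ : h ≤ 1) (hK : 0 ≤ K)
    (hC : 0 ≤ C) (hhK : h * (K * C) ≤ 1) (hP : 0 ≤ P) (hE : 4 * h * E ≤ C * P)
    (hPG : P ≤ 2 * G + 2 * (h ^ 6 * K * E)) : h * E ≤ C * G := by
  have hlower : 2 * (h ^ 6 * K * E) ≤ P / 2 := by
    calc 2 * (h ^ 6 * K * E) = h ^ 5 * K / 2 * (4 * h * E) := by ring
      _ ≤ h ^ 5 * K / 2 * (C * P) := by gcongr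
      _ = h ^ 4 * (h * (K * C)) * P / 2 := by ring
      _ ≤ 1 * 1 * P / 2 := by
        gcongr
        exact pow_le_one₀ hh₀ hh₁
      _ = P / 2 := by ring
  have hPG' : C * P ≤ C * (4 * G) := mul_le_mul_of_nonneg_left (by linarith) hC
  linarith

variable {Ω : Set (EuclideanSpace ℝ (Fin n))} {A : EuclideanSpace ℝ (Fin n) → Fin n → ℂ}
  {q : EuclideanSpace ℝ (Fin n) → ℂ} {h M : ℝ} {φ : EuclideanSpace ℝ (Fin n) → ℝ}

theorem memLp_lowerOrder (hA : MemLp A ⊤ (volume.restrict Ω)) (hq : MemLp q ⊤ (volume.restrict Ω))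
    (c c' : ℂ) (f : 𝓢(EuclideanSpace ℝ (Fin n), ℂ))
    (u : Fin n → 𝓢(EuclideanSpace ℝ (Fin n), ℂ)) :
    MemLp (fun x => c * q x * f x - c' * ∑ j, A x j * u j x) 2 (volume.restrict Ω) := by
  have hL2 (g : 𝓢(EuclideanSpace ℝ (Fin n), ℂ)) : MemLp g 2 (volume.restrict Ω) :=
    (g.memLp 2).restrict Ω
  exact ((hL2 f).mul (hq.const_mul c)).sub
    ((memLp_finsetSum _ fun j _ => (hL2 (u j)).mul (hA.eval j)).const_mul c')

theorem setIntegral_norm_lowerOrder_sq_le (hh₀ : 0 ≤ h) (hh₁ : h ≤ 1)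
    (hM : ∀ᵐ x ∂volume.restrict Ω, ‖A x‖ ≤ M ∧ ‖q x‖ ≤ M)
    (f : 𝓢(EuclideanSpace ℝ (Fin n), ℂ)) :
    ∫ x in Ω, ‖h ^ 4 * q x * f x - Complex.I * h ^ 3 * ∑ j, A x j * conjPd h φ j f x‖ ^ 2 ≤
      h ^ 6 * M ^ 2 * (n + 1) * conjEnergy h φ f := by
  let e (x : EuclideanSpace ℝ (Fin n)) : ℝ := ‖f x‖ ^ 2 + ∑ j, ‖conjPd h φ j f x‖ ^ 2
  have hsum : Integrable fun x => ∑ j, ‖conjPd h φ j f x‖ ^ 2 :=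
    integrable_finsetSum _ fun j _ => integrable_norm_sq _
  have he : Integrable e := (integrable_norm_sq f).add hsum
  have henergy : ∫ x, e x = conjEnergy h φ f := by
    rw [integral_add (integrable_norm_sq f) hsum,
      integral_finsetSum _ fun j _ => integrable_norm_sq _]
    simp only [conjEnergy, norm_toL2_sq]
  calc _ ≤ ∫ x in Ω, h ^ 6 * M ^ 2 * (n + 1) * e x := by
        refine integral_mono_of_nonneg (.of_forall fun x => sq_nonneg _)
          (he.restrict.const_mul _) ?_
        filter_upwards [hM] with x hx
        simpa using norm_lowerOrder_sq_le hh₀ hh₁ hx.1 hx.2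
    _ = h ^ 6 * M ^ 2 * (n + 1) * ∫ x in Ω, e x := integral_const_mul _ _
    _ ≤ h ^ 6 * M ^ 2 * (n + 1) * conjEnergy h φ f := by
        rw [← henergy]
        exact mul_le_mul_of_nonneg_left
          (setIntegral_le_integral he (.of_forall fun x => by positivity)) (by positivity)

theorem norm_toL2_sq_eq_l2sq {f : 𝓢(EuclideanSpace ℝ (Fin n), ℂ)} (hf : tsupport f ⊆ Ω) :
    ‖toL2 _ f‖ ^ 2 = l2sq Ω f := by
  rw [norm_toL2_sq, l2sq, setIntegral_eq_integral_of_forall_compl_eq_zero]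
  exact fun x hx => by simp [image_eq_zero_of_notMem_tsupport fun hx' => hx (hf hx')]

theorem tsupport_sum_conjPd_pow_subset (hgrad : ∀ j, (pdR j φ).HasTemperateGrowth) (m : ℕ)
    (f : 𝓢(EuclideanSpace ℝ (Fin n), ℂ)) :
    tsupport ((∑ j, conjPd h φ j ^ m) f) ⊆ tsupport f := by
  refine closure_minimal (fun x hx => ?_) (isClosed_tsupport f)
  contrapose! hx
  rw [Function.notMem_support, LinearMap.sum_apply, _root_.sum_apply]
  exact Finset.sum_eq_zero fun j _ => image_eq_zero_of_notMem_tsupport fun hx' =>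
    hx (tsupport_conjDeriv_pow_subset (hgrad j) h _ m f hx')

theorem norm_toL2_principal_sq_le (hφ : Differentiable ℝ φ)
    (hgrad : ∀ j, (pdR j φ).HasTemperateGrowth) (hh₀ : 0 < h) (hh₁ : h ≤ 1)
    (hA : MemLp A ⊤ (volume.restrict Ω)) (hq : MemLp q ⊤ (volume.restrict Ω))
    (hM : ∀ᵐ x ∂volume.restrict Ω, ‖A x‖ ≤ M ∧ ‖q x‖ ≤ M)
    {f : 𝓢(EuclideanSpace ℝ (Fin n), ℂ)} (hf : tsupport f ⊆ Ω) :
    ‖toL2 _ ((∑ j, conjPd h φ j ^ 4) f)‖ ^ 2 ≤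
      2 * l2sq Ω (fun x => (Real.exp (φ x / h) : ℂ) * (h : ℂ) ^ 4 *
        opL A q (fun y => (Real.exp (-(φ y) / h) : ℂ) * f y) x) +
      2 * (h ^ 6 * M ^ 2 * (n + 1) * conjEnergy h φ f) := by
  rw [norm_toL2_sq_eq_l2sq ((tsupport_sum_conjPd_pow_subset hgrad 4 f).trans hf)]
  simp only [exp_mul_opL_exp_mul hφ hgrad hh₀.ne']
  refine (integral_norm_sq_le_add ((SchwartzMap.memLp _ 2).restrict Ω)
    (memLp_lowerOrder hA hq (h ^ 4) (Complex.I * h ^ 3) f fun j => conjPd h φ j f)).trans ?_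
  gcongr
  · rfl
  · exact setIntegral_norm_lowerOrder_sq_le hh₀.le hh₁ hM f

theorem mul_l2sq_le_of_mul_conjEnergy_le (hφ : Differentiable ℝ φ)
    (hgrad : ∀ j, (pdR j φ).HasTemperateGrowth) (hh₀ : 0 < h) (hh₁ : h ≤ 1)
    (hA : MemLp A ⊤ (volume.restrict Ω)) (hq : MemLp q ⊤ (volume.restrict Ω))
    (hM : ∀ᵐ x ∂volume.restrict Ω, ‖A x‖ ≤ M ∧ ‖q x‖ ≤ M) {C : ℝ} (hC : 0 ≤ C)
    (hhMC : h * (M ^ 2 * (n + 1) * C) ≤ 1)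
    {f : 𝓢(EuclideanSpace ℝ (Fin n), ℂ)} (hf : tsupport f ⊆ Ω)
    (hE : 4 * h * conjEnergy h φ f ≤ C * ‖toL2 _ ((∑ j, conjPd h φ j ^ 4) f)‖ ^ 2) :
    h * l2sq Ω f ≤ C * l2sq Ω (fun x => (Real.exp (φ x / h) : ℂ) * (h : ℂ) ^ 4 *
      opL A q (fun y => (Real.exp (-(φ y) / h) : ℂ) * f y) x) := by
  have hle : l2sq Ω f ≤ conjEnergy h φ f := by
    rw [← norm_toL2_sq_eq_l2sq hf]
    exact le_add_of_nonneg_right (by positivity)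
  have hprincipal := norm_toL2_principal_sq_le hφ hgrad hh₀ hh₁ hA hq hM hf
  rw [mul_assoc (h ^ 6) (M ^ 2)] at hprincipal
  exact (mul_le_mul_of_nonneg_left hle hh₀.le).trans
    (mul_le_of_absorption hh₀.le hh₁ (by positivity) hC hhMC (sq_nonneg _) hE hprincipal)

end Perturbation

end Carleman

theorem carleman_quadratic_weight_general {n : ℕ} (Ω : Set (EuclideanSpace ℝ (Fin n)))
    (i₀ : Fin n) {σ : ℝ} (hσ : σ ≠ 0) (b : ℝ) {A : EuclideanSpace ℝ (Fin n) → Fin n → ℂ}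
    {q : EuclideanSpace ℝ (Fin n) → ℂ} (hA : MemLp A ⊤ (volume.restrict Ω))
    (hq : MemLp q ⊤ (volume.restrict Ω)) :
    ∃ C > (0 : ℝ), ∃ h₀ : ℝ, 0 < h₀ ∧ h₀ < 1 ∧ ∀ h : ℝ, 0 < h → h < h₀ →
      ∀ w : EuclideanSpace ℝ (Fin n) → ℂ, IsCcInfty Ω w →
        √h * l2norm Ω w ≤ C * l2norm Ω (fun x =>
          (Real.exp (Carleman.quadWeight i₀ σ b x / h) : ℂ) * (h : ℂ) ^ 4 *
            opL A q (fun y => (Real.exp (-(Carleman.quadWeight i₀ σ b y) / h) : ℂ) * w y) x) := by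
  obtain ⟨k₀, hk₀, C, hC, hest⟩ := Carleman.exists_mul_conjEnergy_quadWeight_le i₀ σ hσ
  obtain ⟨M, hM⟩ : ∃ M, ∀ᵐ x ∂volume.restrict Ω, ‖A x‖ ≤ M ∧ ‖q x‖ ≤ M := by
    refine ⟨max (lpNorm A ⊤ (volume.restrict Ω)) (lpNorm q ⊤ (volume.restrict Ω)), ?_⟩
    filter_upwards [ae_le_lpNorm_exponent_top hA, ae_le_lpNorm_exponent_top hq] with x hAx hqx
    exact ⟨hAx.trans (le_max_left _ _), hqx.trans (le_max_right _ _)⟩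
  refine ⟨√C, by positivity, min (1 / 2) (min (k₀ / 4) (1 / (M ^ 2 * (n + 1) * C + 1))),
    by positivity, (min_le_left _ _).trans_lt (by norm_num), fun h hh hlt w ⟨hw, hwc, hwΩ⟩ => ?_⟩
  obtain ⟨hh₁, hhk, hhMC⟩ := by simpa only [lt_min_iff] using hlt
  rw [lt_div_iff₀ (by positivity)] at hhMC
  rw [l2norm, l2norm, ← sqrt_mul hh.le, ← sqrt_mul hC.le]
  exact sqrt_le_sqrt <| Carleman.mul_l2sq_le_of_mul_conjEnergy_le
    (Carleman.differentiable_quadWeight i₀ σ b) (Carleman.hasTemperateGrowth_pdR_quadWeight i₀ σ b)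
    hh (by linarith) hA hq hM hC.le (by linarith) (f := hwc.toSchwartzMap hw) hwΩ
    (hest h hh.le (by linarith) b _)

/-- Lemma 2.5: Carleman inequality with quadratic weight. -/
theorem carleman_quadratic_weight
    (n : ℕ) (hn : 2 ≤ n)
    (Ω : Set (EuclideanSpace ℝ (Fin n))) (hΩopen : IsOpen Ω) (hΩbdd : Bornology.IsBounded Ω)
    (σ c : ℝ) (hσ : σ = 1 ∨ σ = -1)
    (φ : EuclideanSpace ℝ (Fin n) → ℝ)
    (hφ : φ = fun x => σ * x ⟨n - 1, by omega⟩ +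
      (∑ j ∈ Finset.univ.erase (⟨n - 1, by omega⟩ : Fin n), (x j) ^ 2) - σ * c ^ 2)
    (A : EuclideanSpace ℝ (Fin n) → Fin n → ℂ) (q : EuclideanSpace ℝ (Fin n) → ℂ)
    (hA : BddLipOn Ω A) (hq : BddMeasOn Ω q) :
    ∃ C > (0 : ℝ), ∃ h₀ : ℝ, 0 < h₀ ∧ h₀ < 1 ∧
      ∀ h : ℝ, 0 < h → h < h₀ →
        ∀ w : EuclideanSpace ℝ (Fin n) → ℂ, IsCcInfty Ω w →
          h * l2norm Ω w ≤
            C * l2norm Ω (fun x =>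
              (Real.exp (φ x / h) : ℂ) * (h : ℂ) ^ 4 *
                opL A q (fun y => (Real.exp (-(φ y) / h) : ℂ) * w y) x) := by
  obtain ⟨⟨M, hM⟩, K, hK⟩ := hA
  obtain ⟨hqmeas, N, hN⟩ := hq
  have hA' : MemLp A ⊤ (volume.restrict Ω) :=
    memLp_top_of_bound (hK.continuousOn.aestronglyMeasurable hΩopen.measurableSet) M
      (ae_restrict_of_forall_mem hΩopen.measurableSet hM)
  have hq' : MemLp q ⊤ (volume.restrict Ω) :=
    memLp_top_of_bound hqmeas.aestronglyMeasurable N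
      (ae_restrict_of_forall_mem hΩopen.measurableSet hN)
  have hσ0 : σ ≠ 0 := by obtain rfl | rfl := hσ <;> norm_num
  obtain ⟨C, hC, h₀, hh₀, hh₀', hest⟩ :=
    carleman_quadratic_weight_general Ω ⟨n - 1, by omega⟩ hσ0 (σ * c ^ 2) hA' hq'
  refine ⟨C, hC, h₀, hh₀, hh₀', fun h hh hlt w hw => ?_⟩
  have hsqrt : h ≤ √h := le_sqrt_of_sq_le (by nlinarith)
  rw [hφ]
  exact (mul_le_mul_of_nonneg_right hsqrt (sqrt_nonneg _)).trans (hest h hh hlt w hw)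
end
end

section
/- Poisson bracket for the quadratic Carleman weight. Let n ≥ 2, σ ∈ {+1,−1}, c ∈ ℝ, and φ(x) = σ·x_n + Σ_{j=1}^{n−1} x_j² − σ·c² on ℝⁿ. Then for all x ∈ ℝⁿ and ξ ∈ ℝⁿ, the Poisson bracket of the associated symbols satisfies {a,b}(x,ξ) = 32 Σ_{j=1}^{n−1} (ξ_j² + 4x_j²)³; in particular {a,b}(x,ξ) ≥ 0 everywhere (so the hypothesis '{a,b} ≥ 0 on the set a = b = 0' holds for this weight). -/
open MeasureTheory Real Set

noncomputable section

/-!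
The symbols are the real and imaginary parts of `P = ∑ⱼ ζⱼ⁴` with `ζ = ξ + i∇φ(x)`, so the bracket
is `∑ₖ Im (conj (∂P/∂ξₖ) · ∂P/∂xₖ)`. Since `∂P/∂ξₖ = 4 ζₖ³` and `∂P/∂xₖ = 4i ∑ⱼ (∂ₖ∂ⱼφ) ζⱼ³`, this
equals `16 ∑ₖ ∑ⱼ (∂ₖ∂ⱼφ) ⟪ζₖ³, ζⱼ³⟫`. For a diagonal Hessian only the terms
`(∂ₖ²φ) |ζₖ|⁶ = (∂ₖ²φ) (ξₖ² + (∂ₖφ)²)³` survive, and for the quadratic weight `∂ₖ²φ` is `2`, except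
in the affine coordinate, where it vanishes.
-/

open scoped ComplexConjugate InnerProductSpace

section ComplexParts

variable {E : Type*} [NormedAddCommGroup E] [NormedSpace ℝ E] {f : E → ℂ} {x : E}

lemma fderiv_re_apply (hf : DifferentiableAt ℝ f x) (v : E) :
    fderiv ℝ (fun y ↦ (f y).re) x v = (fderiv ℝ f x v).re :=
  DFunLike.congr_fun (Complex.reCLM.hasFDerivAt.comp x hf.hasFDerivAt).fderiv v

lemma fderiv_im_apply (hf : DifferentiableAt ℝ f x) (v : E) :
    fderiv ℝ (fun y ↦ (f y).im) x v = (fderiv ℝ f x v).im :=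
  DFunLike.congr_fun (Complex.imCLM.hasFDerivAt.comp x hf.hasFDerivAt).fderiv v

end ComplexParts

section ConjugatedSymbol

variable {n : ℕ} {φ : EuclideanSpace ℝ (Fin n) → ℝ} {x ξ : EuclideanSpace ℝ (Fin n)}

/-- The complex covector `ζ = ξ + i∇φ(x)` which replaces `ξ` in the principal symbol when `∑ⱼ Dⱼ⁴`
is conjugated with an exponential of the weight `φ`. -/
def complexCovector (φ : EuclideanSpace ℝ (Fin n) → ℝ) (x ξ : EuclideanSpace ℝ (Fin n))
    (j : Fin n) : ℂ :=
  ξ j + pdR j φ x * Complex.I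

/-- The principal symbol `∑ⱼ ζⱼ⁴` of the conjugated operator; the paper's symbols `a` and `b` are
its real and imaginary parts. -/
def conjugatedSymbol (φ : EuclideanSpace ℝ (Fin n) → ℝ) (x ξ : EuclideanSpace ℝ (Fin n)) : ℂ :=
  ∑ j, complexCovector φ x ξ j ^ 4

lemma re_complexCovector (j : Fin n) : (complexCovector φ x ξ j).re = ξ j := by
  simp [complexCovector]

lemma im_complexCovector (j : Fin n) : (complexCovector φ x ξ j).im = pdR j φ x := by
  simp [complexCovector]

lemma normSq_complexCovector (j : Fin n) :
    Complex.normSq (complexCovector φ x ξ j) = ξ j ^ 2 + pdR j φ x ^ 2 :=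
  Complex.normSq_add_mul_I _ _

lemma symA_eq_re_conjugatedSymbol : symA φ x ξ = (conjugatedSymbol φ x ξ).re := by
  simp only [symA, conjugatedSymbol, Complex.re_sum]
  refine Finset.sum_congr rfl fun j _ ↦ ?_
  simp only [pow_succ, pow_zero, one_mul, Complex.mul_re, Complex.mul_im, re_complexCovector,
    im_complexCovector]
  ring

lemma symB_eq_im_conjugatedSymbol : symB φ x ξ = (conjugatedSymbol φ x ξ).im := by
  simp only [symB, conjugatedSymbol, Complex.im_sum]
  refine Finset.sum_congr rfl fun j _ ↦ ?_
  simp only [pow_succ, pow_zero, one_mul, Complex.mul_re, Complex.mul_im, re_complexCovector,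
    im_complexCovector]
  ring

lemma hasFDerivAt_conjugatedSymbol_covector :
    HasFDerivAt (conjugatedSymbol φ x)
      (∑ j, (4 * complexCovector φ x ξ j ^ 3) •
        Complex.ofRealCLM.comp (EuclideanSpace.proj j : EuclideanSpace ℝ (Fin n) →L[ℝ] ℝ)) ξ := by
  refine HasFDerivAt.fun_sum fun j _ ↦ ?_
  have hζ : HasFDerivAt (fun η ↦ complexCovector φ x η j)
      (Complex.ofRealCLM.comp (EuclideanSpace.proj j : EuclideanSpace ℝ (Fin n) →L[ℝ] ℝ)) ξ :=
    (Complex.ofRealCLM.hasFDerivAt.comp ξ (PiLp.hasFDerivAt_apply 2 ξ j)).add_const _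
  simpa using hζ.pow 4

lemma hasFDerivAt_conjugatedSymbol_position (hφ : ∀ j, DifferentiableAt ℝ (pdR j φ) x) :
    HasFDerivAt (conjugatedSymbol φ · ξ)
      (∑ j, (4 * complexCovector φ x ξ j ^ 3) •
        Complex.I • Complex.ofRealCLM.comp (fderiv ℝ (pdR j φ) x)) x := by
  refine HasFDerivAt.fun_sum fun j _ ↦ ?_
  have hζ : HasFDerivAt (fun y ↦ complexCovector φ y ξ j)
      (Complex.I • Complex.ofRealCLM.comp (fderiv ℝ (pdR j φ) x)) x :=
    ((Complex.ofRealCLM.hasFDerivAt.comp x (hφ j).hasFDerivAt).mul_const _).const_add _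
  simpa using hζ.pow 4

lemma fderiv_conjugatedSymbol_covector_single (k : Fin n) :
    fderiv ℝ (conjugatedSymbol φ x) ξ (EuclideanSpace.single k 1) =
      4 * complexCovector φ x ξ k ^ 3 := by
  simp [hasFDerivAt_conjugatedSymbol_covector.fderiv, apply_ite]

lemma fderiv_conjugatedSymbol_position_single (hφ : ∀ j, DifferentiableAt ℝ (pdR j φ) x)
    (k : Fin n) :
    fderiv ℝ (conjugatedSymbol φ · ξ) x (EuclideanSpace.single k 1) =
      4 * Complex.I * ∑ j, pdR k (pdR j φ) x * complexCovector φ x ξ j ^ 3 := by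
  rw [(hasFDerivAt_conjugatedSymbol_position hφ).fderiv, Finset.mul_sum]
  simp only [sum_apply, smul_apply, ContinuousLinearMap.comp_apply, Complex.ofRealCLM_apply,
    smul_eq_mul]
  refine Finset.sum_congr rfl fun j _ ↦ ?_
  rw [pdR]
  ring

lemma poisson_eq_sum_im_conj_mul (hφ : ∀ j, DifferentiableAt ℝ (pdR j φ) x) :
    poisson φ x ξ = ∑ k,
      (conj (fderiv ℝ (conjugatedSymbol φ x) ξ (EuclideanSpace.single k 1)) *
        fderiv ℝ (conjugatedSymbol φ · ξ) x (EuclideanSpace.single k 1)).im := by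
  have hξ := (hasFDerivAt_conjugatedSymbol_covector (φ := φ) (x := x) (ξ := ξ)).differentiableAt
  have hx := (hasFDerivAt_conjugatedSymbol_position (ξ := ξ) hφ).differentiableAt
  simp only [poisson, symA_eq_re_conjugatedSymbol, symB_eq_im_conjugatedSymbol, fderiv_re_apply hξ,
    fderiv_im_apply hξ, fderiv_re_apply hx, fderiv_im_apply hx]
  refine Finset.sum_congr rfl fun k _ ↦ ?_
  rw [Complex.mul_im, Complex.conj_re, Complex.conj_im]
  ring

theorem poisson_eq_sum_hessian_mul_inner (hφ : ∀ j, DifferentiableAt ℝ (pdR j φ) x) :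
    poisson φ x ξ = 16 * ∑ k, ∑ j, pdR k (pdR j φ) x *
      ⟪complexCovector φ x ξ k ^ 3, complexCovector φ x ξ j ^ 3⟫_ℝ := by
  rw [poisson_eq_sum_im_conj_mul hφ, Finset.mul_sum]
  refine Finset.sum_congr rfl fun k _ ↦ ?_
  rw [fderiv_conjugatedSymbol_covector_single, fderiv_conjugatedSymbol_position_single hφ]
  simp only [Finset.mul_sum, Complex.im_sum]
  refine Finset.sum_congr rfl fun j _ ↦ ?_
  have hfactor (r : ℝ) (w z : ℂ) :
      conj (4 * w) * (4 * Complex.I * (r * z)) = ↑(16 * r) * (Complex.I * (conj w * z)) := by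
    rw [map_mul, map_ofNat]
    push_cast
    ring
  rw [hfactor, Complex.im_ofReal_mul, Complex.I_mul_im, Complex.inner, mul_comm (conj _),
    mul_assoc]

theorem poisson_eq_of_hessian_diagonal (hφ : ∀ j, DifferentiableAt ℝ (pdR j φ) x)
    (hdiag : ∀ j k, j ≠ k → pdR k (pdR j φ) x = 0) :
    poisson φ x ξ = 16 * ∑ k, pdR k (pdR k φ) x * (ξ k ^ 2 + pdR k φ x ^ 2) ^ 3 := by
  rw [poisson_eq_sum_hessian_mul_inner hφ]
  congr 1
  refine Finset.sum_congr rfl fun k _ ↦ ?_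
  rw [Finset.sum_eq_single k (fun j _ hjk ↦ by rw [hdiag j k hjk, zero_mul]) (by simp),
    real_inner_self_eq_norm_sq, norm_pow, ← normSq_complexCovector, Complex.normSq_eq_norm_sq]
  ring

end ConjugatedSymbol

section QuadraticWeight

variable {n : ℕ}

/-- The weight `σ xₗ + ∑_{j ≠ l} xⱼ² - κ`, affine in the coordinate `l` and quadratic in the
others. The paper's weight has the last coordinate as `l` and `κ = σ c²`. -/
def quadraticWeight (l : Fin n) (σ κ : ℝ) (x : EuclideanSpace ℝ (Fin n)) : ℝ :=
  σ * x l + (∑ j ∈ Finset.univ.erase l, x j ^ 2) - κ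

variable (l : Fin n) (σ κ : ℝ)

lemma pdR_quadraticWeight (j : Fin n) :
    pdR j (quadraticWeight l σ κ) = fun x ↦ if j = l then σ else 2 * x j := by
  funext x
  have hcoord (i : Fin n) : HasFDerivAt (fun y : EuclideanSpace ℝ (Fin n) ↦ y i)
      (EuclideanSpace.proj i : EuclideanSpace ℝ (Fin n) →L[ℝ] ℝ) x :=
    PiLp.hasFDerivAt_apply 2 x i
  have hφ : HasFDerivAt (quadraticWeight l σ κ) _ x :=
    (((hcoord l).const_mul σ).add
      (HasFDerivAt.fun_sum fun i _ ↦ (hcoord i).pow 2)).sub_const κ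
  rw [pdR, hφ.fderiv]
  by_cases hj : j = l <;> simp [hj]

lemma differentiable_pdR_quadraticWeight (j : Fin n) :
    Differentiable ℝ (pdR j (quadraticWeight l σ κ)) := by
  rw [pdR_quadraticWeight]
  split_ifs <;> fun_prop

lemma pdR_pdR_quadraticWeight (j k : Fin n) (x : EuclideanSpace ℝ (Fin n)) :
    pdR k (pdR j (quadraticWeight l σ κ)) x = if j = k ∧ j ≠ l then 2 else 0 := by
  rw [pdR_quadraticWeight, pdR]
  by_cases hj : j = l
  · simp [hj]
  · simp only [hj, if_false]
    rw [((PiLp.hasFDerivAt_apply 2 x j).const_mul 2).fderiv]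
    simp [hj]

end QuadraticWeight

theorem poisson_bracket_quadratic_weight_general {n : ℕ} (l : Fin n) (σ κ : ℝ)
    (x ξ : EuclideanSpace ℝ (Fin n)) :
    poisson (quadraticWeight l σ κ) x ξ =
        32 * ∑ j ∈ Finset.univ.erase l, (ξ j ^ 2 + 4 * x j ^ 2) ^ 3 ∧
      0 ≤ poisson (quadraticWeight l σ κ) x ξ := by
  have hpoisson : poisson (quadraticWeight l σ κ) x ξ =
      32 * ∑ j ∈ Finset.univ.erase l, (ξ j ^ 2 + 4 * x j ^ 2) ^ 3 := by
    rw [poisson_eq_of_hessian_diagonal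
      (fun j ↦ (differentiable_pdR_quadraticWeight l σ κ j).differentiableAt)
      (fun j k hjk ↦ by simp [pdR_pdR_quadraticWeight, hjk]),
      ← Finset.add_sum_erase _ _ (Finset.mem_univ l)]
    simp only [pdR_pdR_quadraticWeight]
    simp only [pdR_quadraticWeight, ne_eq, not_true_eq_false, and_false, if_false, zero_mul,
      zero_add, Finset.mul_sum]
    refine Finset.sum_congr rfl fun j hj ↦ ?_
    simp only [Finset.ne_of_mem_erase hj, not_false_eq_true, and_self, if_true, if_false]
    ring
  refine ⟨hpoisson, ?_⟩
  rw [hpoisson]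
  positivity

/-- Poisson bracket for the quadratic Carleman weight. -/
theorem poisson_bracket_quadratic_weight
    (n : ℕ) (hn : 2 ≤ n) (σ c : ℝ) (hσ : σ = 1 ∨ σ = -1)
    (φ : EuclideanSpace ℝ (Fin n) → ℝ)
    (hφ : φ = fun x => σ * x ⟨n - 1, by omega⟩ +
      (∑ j ∈ Finset.univ.erase (⟨n - 1, by omega⟩ : Fin n), (x j) ^ 2) - σ * c ^ 2) :
    ∀ x ξ : EuclideanSpace ℝ (Fin n),
      poisson φ x ξ =
        32 * ∑ j ∈ Finset.univ.erase (⟨n - 1, by omega⟩ : Fin n),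
          ((ξ j) ^ 2 + 4 * (x j) ^ 2) ^ 3 ∧
      0 ≤ poisson φ x ξ := by
  subst hφ
  exact poisson_bracket_quadratic_weight_general _ σ (σ * c ^ 2)
end
end

section
/- Poisson bracket under convexification of the weight (identity (2.9) of the paper). Let n ≥ 1, let φ : ℝⁿ → ℝ and f : ℝ → ℝ be smooth, set ψ := f∘φ, and let a_ψ, b_ψ be the symbols associated with the weight ψ. Fix x ∈ ℝⁿ and ξ ∈ ℝⁿ with a(x,ξ) = 0 and b(x,ξ) = 0, and set η := f'(φ(x))·ξ. Then {a_ψ, b_ψ}(x,η) = 64·(Σ_{j=1}^n ξ_j(∂_{x_j}φ(x))³)² · f'(φ(x))⁶ f''(φ(x)) + 4·(Σ_{j=1}^n ξ_j⁴ − Σ_{j=1}^n (∂_{x_j}φ(x))⁴)² · f'(φ(x))⁶ f''(φ(x)) + f'(φ(x))⁷ · {a,b}(x,ξ). -/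
open MeasureTheory Real Set

noncomputable section

/-!
The symbols are the real and imaginary parts of `∑ⱼ (ξⱼ + i pⱼ)⁴` with `p = ∇φ`. By the
Cauchy-Riemann equations `∂a/∂p = -∂b/∂ξ` and `∂b/∂p = ∂a/∂ξ`, so `{a, b}` is the Hessian of `φ`
evaluated on `∂a/∂ξ` plus the Hessian of `φ` evaluated on `∂b/∂ξ`. Passing from `φ` to `f ∘ φ`
multiplies the Hessian by `f'` and adds the rank-one term `f'' p pᵀ`, while the scaling
`(ξ, p) ↦ (f' ξ, f' p)` multiplies `∂a/∂ξ` and `∂b/∂ξ`, homogeneous of degree three, by `f'³`.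
The rank-one term thus yields `f'⁶ f'' ((p ⬝ ∂a/∂ξ)² + (p ⬝ ∂b/∂ξ)²)`.
-/

/-- The real part of `4 (t + ip)³`: the `ξⱼ`-derivative of `symA` at `t = ξⱼ`, `p = ∂ⱼφ`. -/
def quarticReDeriv (t p : ℝ) : ℝ := 4 * t ^ 3 - 12 * p ^ 2 * t

/-- The imaginary part of `4 (t + ip)³`: the `ξⱼ`-derivative of `symB` at `t = ξⱼ`, `p = ∂ⱼφ`. -/
def quarticImDeriv (t p : ℝ) : ℝ := 12 * p * t ^ 2 - 4 * p ^ 3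

lemma quarticReDeriv_mul_mul (c t p : ℝ) :
    quarticReDeriv (c * t) (c * p) = c ^ 3 * quarticReDeriv t p := by
  simp only [quarticReDeriv]
  ring

lemma quarticImDeriv_mul_mul (c t p : ℝ) :
    quarticImDeriv (c * t) (c * p) = c ^ 3 * quarticImDeriv t p := by
  simp only [quarticImDeriv]
  ring

section ChainRule

variable {E : Type*} [NormedAddCommGroup E] [NormedSpace ℝ E]
  {t p : E → ℝ} {t' p' : E →L[ℝ] ℝ} {x : E}

lemma hasFDerivAt_quarticRe (ht : HasFDerivAt t t' x) (hp : HasFDerivAt p p' x) :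
    HasFDerivAt (fun y => t y ^ 4 - 6 * p y ^ 2 * t y ^ 2 + p y ^ 4)
      (quarticReDeriv (t x) (p x) • t' - quarticImDeriv (t x) (p x) • p') x := by
  refine (((ht.pow 4).sub (((hp.pow 2).const_mul 6).mul (ht.pow 2))).add
    (hp.pow 4)).congr_fderiv ?_
  ext v
  simp only [Nat.add_one_sub_one, nsmul_eq_mul, Nat.cast_ofNat, pow_one, add_apply, sub_apply,
    smul_apply, smul_eq_mul, quarticReDeriv, quarticImDeriv]
  ring

lemma hasFDerivAt_quarticIm (ht : HasFDerivAt t t' x) (hp : HasFDerivAt p p' x) :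
    HasFDerivAt (fun y => 4 * p y * t y ^ 3 - 4 * p y ^ 3 * t y)
      (quarticImDeriv (t x) (p x) • t' + quarticReDeriv (t x) (p x) • p') x := by
  refine (((hp.const_mul 4).mul (ht.pow 3)).sub
    (((hp.pow 3).const_mul 4).mul ht)).congr_fderiv ?_
  ext v
  simp only [Nat.add_one_sub_one, nsmul_eq_mul, Nat.cast_ofNat, add_apply, sub_apply,
    smul_apply, smul_eq_mul, quarticReDeriv, quarticImDeriv]
  ring

end ChainRule

lemma differentiableAt_fderiv_apply {E F : Type*} [NormedAddCommGroup E] [NormedSpace ℝ E]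
    [NormedAddCommGroup F] [NormedSpace ℝ F] {u : E → F} {x : E} (hu : ContDiffAt ℝ 2 u x)
    (v : E) : DifferentiableAt ℝ (fun y => fderiv ℝ u y v) x :=
  ((hu.fderiv_right (m := 1) (by norm_num)).differentiableAt (by norm_num)).clm_apply
    (differentiableAt_const v)

section Symbols

variable {n : ℕ} {φ : EuclideanSpace ℝ (Fin n) → ℝ} {x : EuclideanSpace ℝ (Fin n)}

lemma fderiv_symA_covector_single (φ : EuclideanSpace ℝ (Fin n) → ℝ)
    (x ξ : EuclideanSpace ℝ (Fin n)) (k : Fin n) :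
    fderiv ℝ (fun ξ' => symA φ x ξ') ξ (EuclideanSpace.single k 1) =
      quarticReDeriv (ξ k) (pdR k φ x) := by
  have h : HasFDerivAt (fun ξ' => symA φ x ξ') _ ξ := HasFDerivAt.fun_sum fun j _ =>
    hasFDerivAt_quarticRe (EuclideanSpace.proj (𝕜 := ℝ) j).hasFDerivAt
      (hasFDerivAt_const (pdR j φ x) ξ)
  rw [h.fderiv]
  simp

lemma fderiv_symB_covector_single (φ : EuclideanSpace ℝ (Fin n) → ℝ)
    (x ξ : EuclideanSpace ℝ (Fin n)) (k : Fin n) :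
    fderiv ℝ (fun ξ' => symB φ x ξ') ξ (EuclideanSpace.single k 1) =
      quarticImDeriv (ξ k) (pdR k φ x) := by
  have h : HasFDerivAt (fun ξ' => symB φ x ξ') _ ξ := HasFDerivAt.fun_sum fun j _ =>
    hasFDerivAt_quarticIm (EuclideanSpace.proj (𝕜 := ℝ) j).hasFDerivAt
      (hasFDerivAt_const (pdR j φ x) ξ)
  rw [h.fderiv]
  simp

lemma fderiv_symA_base (hφ : ∀ j, DifferentiableAt ℝ (pdR j φ) x)
    (ξ v : EuclideanSpace ℝ (Fin n)) :
    fderiv ℝ (fun y => symA φ y ξ) x v =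
      -∑ j, quarticImDeriv (ξ j) (pdR j φ x) * fderiv ℝ (pdR j φ) x v := by
  have h : HasFDerivAt (fun y => symA φ y ξ) _ x := HasFDerivAt.fun_sum fun j _ =>
    hasFDerivAt_quarticRe (hasFDerivAt_const (ξ j) x) (hφ j).hasFDerivAt
  rw [h.fderiv]
  simp

lemma fderiv_symB_base (hφ : ∀ j, DifferentiableAt ℝ (pdR j φ) x)
    (ξ v : EuclideanSpace ℝ (Fin n)) :
    fderiv ℝ (fun y => symB φ y ξ) x v =
      ∑ j, quarticReDeriv (ξ j) (pdR j φ x) * fderiv ℝ (pdR j φ) x v := by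
  have h : HasFDerivAt (fun y => symB φ y ξ) _ x := HasFDerivAt.fun_sum fun j _ =>
    hasFDerivAt_quarticIm (hasFDerivAt_const (ξ j) x) (hφ j).hasFDerivAt
  rw [h.fderiv]
  simp

lemma poisson_eq_sum_hessian (hφ : ∀ j, DifferentiableAt ℝ (pdR j φ) x)
    (ξ : EuclideanSpace ℝ (Fin n)) :
    poisson φ x ξ = ∑ k, ∑ j, pdR k (pdR j φ) x *
      (quarticReDeriv (ξ k) (pdR k φ x) * quarticReDeriv (ξ j) (pdR j φ x) +
        quarticImDeriv (ξ k) (pdR k φ x) * quarticImDeriv (ξ j) (pdR j φ x)) := by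
  refine Finset.sum_congr rfl fun k _ => ?_
  rw [fderiv_symA_covector_single, fderiv_symB_covector_single, fderiv_symA_base hφ,
    fderiv_symB_base hφ, neg_mul, sub_neg_eq_add, Finset.mul_sum, Finset.sum_mul,
    ← Finset.sum_add_distrib]
  refine Finset.sum_congr rfl fun j _ => ?_
  simp only [pdR]
  ring

lemma sum_pdR_mul_quarticReDeriv (φ : EuclideanSpace ℝ (Fin n) → ℝ)
    (x ξ : EuclideanSpace ℝ (Fin n)) :
    ∑ j, pdR j φ x * quarticReDeriv (ξ j) (pdR j φ x) =
      symB φ x ξ - 8 * ∑ j, ξ j * pdR j φ x ^ 3 := by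
  rw [symB, Finset.mul_sum, ← Finset.sum_sub_distrib]
  refine Finset.sum_congr rfl fun j _ => ?_
  rw [quarticReDeriv]
  ring

lemma sum_pdR_mul_quarticImDeriv (φ : EuclideanSpace ℝ (Fin n) → ℝ)
    (x ξ : EuclideanSpace ℝ (Fin n)) :
    ∑ j, pdR j φ x * quarticImDeriv (ξ j) (pdR j φ x) =
      2 * (∑ j, ξ j ^ 4 - ∑ j, pdR j φ x ^ 4 - symA φ x ξ) := by
  rw [symA, ← Finset.sum_sub_distrib, ← Finset.sum_sub_distrib, Finset.mul_sum]
  refine Finset.sum_congr rfl fun j _ => ?_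
  rw [quarticImDeriv]
  ring

end Symbols

section Convexification

variable {n : ℕ} {φ : EuclideanSpace ℝ (Fin n) → ℝ} {f : ℝ → ℝ}
  {x : EuclideanSpace ℝ (Fin n)}

lemma differentiableAt_pdR (hφ : ContDiffAt ℝ 2 φ x) (j : Fin n) :
    DifferentiableAt ℝ (pdR j φ) x :=
  differentiableAt_fderiv_apply hφ _

lemma pdR_comp (hf : DifferentiableAt ℝ f (φ x)) (hφ : DifferentiableAt ℝ φ x) (j : Fin n) :
    pdR j (fun y => f (φ y)) x = deriv f (φ x) * pdR j φ x := by
  have h : HasFDerivAt (fun y => f (φ y)) (deriv f (φ x) • fderiv ℝ φ x) x :=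
    hf.hasDerivAt.comp_hasFDerivAt x hφ.hasFDerivAt
  simp only [pdR, h.fderiv, smul_apply, smul_eq_mul]

lemma pdR_mul {u v : EuclideanSpace ℝ (Fin n) → ℝ} (hu : DifferentiableAt ℝ u x)
    (hv : DifferentiableAt ℝ v x) (k : Fin n) :
    pdR k (fun y => u y * v y) x = u x * pdR k v x + pdR k u x * v x := by
  simp only [pdR, fderiv_fun_mul hu hv, add_apply,
    smul_apply, smul_eq_mul, mul_comm (v x)]

lemma pdR_pdR_comp (hφ : ContDiffAt ℝ 2 φ x) (hf : ContDiffAt ℝ 2 f (φ x)) (k j : Fin n) :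
    pdR k (pdR j fun y => f (φ y)) x =
      deriv f (φ x) * pdR k (pdR j φ) x + deriv (deriv f) (φ x) * (pdR k φ x * pdR j φ x) := by
  have hf' : DifferentiableAt ℝ (deriv f) (φ x) := differentiableAt_fderiv_apply hf 1
  have hφx : DifferentiableAt ℝ φ x := hφ.differentiableAt (by norm_num)
  have hgrad : pdR j (fun y => f (φ y)) =ᶠ[nhds x] fun y => deriv f (φ y) * pdR j φ y := by
    filter_upwards [hφ.eventually (by norm_num),
      hφ.continuousAt.eventually (hf.eventually (by norm_num))] with y hφy hfy
    exact pdR_comp (hfy.differentiableAt (by norm_num)) (hφy.differentiableAt (by norm_num)) j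
  calc pdR k (pdR j fun y => f (φ y)) x
      = pdR k (fun y => deriv f (φ y) * pdR j φ y) x := by rw [pdR, hgrad.fderiv_eq, pdR]
    _ = deriv f (φ x) * pdR k (pdR j φ) x + pdR k (fun y => deriv f (φ y)) x * pdR j φ x :=
        pdR_mul (hf'.comp x hφx) (differentiableAt_pdR hφ j) k
    _ = deriv f (φ x) * pdR k (pdR j φ) x +
          deriv (deriv f) (φ x) * (pdR k φ x * pdR j φ x) := by
        rw [pdR_comp hf' hφx, mul_assoc]

theorem poisson_bracket_convexification_general (hφ : ContDiffAt ℝ 2 φ x)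
    (hf : ContDiffAt ℝ 2 f (φ x)) (ξ : EuclideanSpace ℝ (Fin n)) :
    poisson (fun y => f (φ y)) x (deriv f (φ x) • ξ) =
      deriv f (φ x) ^ 6 * deriv (deriv f) (φ x) *
          ((symB φ x ξ - 8 * ∑ j, ξ j * pdR j φ x ^ 3) ^ 2 +
            (2 * (∑ j, ξ j ^ 4 - ∑ j, pdR j φ x ^ 4 - symA φ x ξ)) ^ 2) +
        deriv f (φ x) ^ 7 * poisson φ x ξ := by
  have hψ : ContDiffAt ℝ 2 (fun y => f (φ y)) x := hf.comp x hφ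
  have hgrad (j : Fin n) : pdR j (fun y => f (φ y)) x = deriv f (φ x) * pdR j φ x :=
    pdR_comp (hf.differentiableAt (by norm_num)) (hφ.differentiableAt (by norm_num)) j
  rw [poisson_eq_sum_hessian (differentiableAt_pdR hψ),
    poisson_eq_sum_hessian (differentiableAt_pdR hφ), ← sum_pdR_mul_quarticReDeriv,
    ← sum_pdR_mul_quarticImDeriv, sq (∑ j, _), sq (∑ j, _), Finset.sum_mul_sum,
    Finset.sum_mul_sum]
  simp only [pdR_pdR_comp hφ hf, hgrad, PiLp.smul_apply, smul_eq_mul, quarticReDeriv_mul_mul,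
    quarticImDeriv_mul_mul, Finset.mul_sum, ← Finset.sum_add_distrib]
  refine Finset.sum_congr rfl fun k _ => Finset.sum_congr rfl fun j _ => ?_
  ring

end Convexification

/-- identity (2.9): Poisson bracket under convexification of the weight. -/
theorem poisson_bracket_convexification
    (n : ℕ) (hn : 1 ≤ n)
    (φ : EuclideanSpace ℝ (Fin n) → ℝ) (hφ : ContDiff ℝ (⊤ : ℕ∞) φ)
    (f : ℝ → ℝ) (hf : ContDiff ℝ (⊤ : ℕ∞) f)
    (x ξ : EuclideanSpace ℝ (Fin n))
    (ha : symA φ x ξ = 0) (hb : symB φ x ξ = 0) :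
    poisson (fun y => f (φ y)) x (deriv f (φ x) • ξ) =
      64 * (∑ j : Fin n, ξ j * (pdR j φ x) ^ 3) ^ 2 *
          (deriv f (φ x)) ^ 6 * deriv (deriv f) (φ x)
        + 4 * ((∑ j : Fin n, (ξ j) ^ 4) - ∑ j : Fin n, (pdR j φ x) ^ 4) ^ 2 *
          (deriv f (φ x)) ^ 6 * deriv (deriv f) (φ x)
        + (deriv f (φ x)) ^ 7 * poisson φ x ξ := by
  rw [poisson_bracket_convexification_general (hφ.contDiffAt.of_le (by norm_cast))
    (hf.contDiffAt.of_le (by norm_cast)), ha, hb]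
  ring
end
end

section
/- Lower bound for the real part of the conjugated operator (estimate (2.11) of the paper). Let n ≥ 1, let Ω ⊂ ℝⁿ be a bounded open set, and let ϱ ∈ ℝⁿ be a nonzero vector. For h > 0 and w smooth with compact support in Ω, define 𝒜w := Σ_{j=1}^n (h⁴ ∂_{x_j}⁴w + 6h²ϱ_j² ∂_{x_j}²w + ϱ_j⁴ w). Then there exists a constant C > 0, depending only on Ω, ϱ and n, such that for all h ∈ (0,1) and all w ∈ C_c^∞(Ω): h²·(‖w‖²_{L²(Ω)} + h²‖∇w‖²_{L²(Ω)}) ≤ C·(‖𝒜w‖²_{L²(Ω)} + h²‖∇w‖²_{L²(Ω)}). -/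
open MeasureTheory Real Set

noncomputable section

/-!
Since `h < 1`, the estimate follows from the Poincaré inequality. For that, let `ℓ` be a linear
functional with `ℓ v = 1` and `|ℓ - a| ≤ R` on the support of `w`. The derivative of
`(ℓ - a) ‖w‖²` in the direction `v` is `‖w‖² + 2 (ℓ - a) ⟪w, ∂ᵥw⟫`, which is at least
`‖w‖² / 2 - 2 R² ‖∂ᵥw‖²` by Young's inequality, and its integral is zero. In the theorem `ℓ` is a
coordinate, bounded on `Ω`.
-/

lemma integrable_norm_sq_of_hasCompactSupport {X F : Type*} [TopologicalSpace X]
    [MeasurableSpace X] [OpensMeasurableSpace X] {μ : Measure X} [IsFiniteMeasureOnCompacts μ]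
    [NormedAddCommGroup F] {f : X → F} (hf : Continuous f) (hfc : HasCompactSupport f) :
    Integrable (fun x ↦ ‖f x‖ ^ 2) μ :=
  (hf.memLp_of_hasCompactSupport hfc).integrable_norm_pow two_ne_zero

section Poincare

variable {E F : Type*} [NormedAddCommGroup E] [NormedSpace ℝ E] [NormedAddCommGroup F]

section NormedSpace

variable [NormedSpace ℝ F] {f : E → F}

lemma continuous_fderiv_apply (hf : ContDiff ℝ 1 f) (v : E) :
    Continuous fun x ↦ fderiv ℝ f x v :=
  (hf.continuous_fderiv one_ne_zero).clm_apply continuous_const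

variable [MeasurableSpace E] [BorelSpace E] {μ : Measure E}

lemma integrable_fderiv_apply [IsFiniteMeasureOnCompacts μ] (hf : ContDiff ℝ 1 f)
    (hfc : HasCompactSupport f) (v : E) :
    Integrable (fun x ↦ fderiv ℝ f x v) μ :=
  (continuous_fderiv_apply hf v).integrable_of_hasCompactSupport (hfc.fderiv_apply ℝ v)

lemma integrable_norm_fderiv_apply_sq [IsFiniteMeasureOnCompacts μ] (hf : ContDiff ℝ 1 f)
    (hfc : HasCompactSupport f) (v : E) :
    Integrable (fun x ↦ ‖fderiv ℝ f x v‖ ^ 2) μ :=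
  integrable_norm_sq_of_hasCompactSupport (continuous_fderiv_apply hf v) (hfc.fderiv_apply ℝ v)

lemma integral_fderiv_apply_eq_zero [FiniteDimensional ℝ E] [μ.IsAddHaarMeasure]
    (hf : ContDiff ℝ 1 f) (hfc : HasCompactSupport f) (v : E) :
    ∫ x, fderiv ℝ f x v ∂μ = 0 := by
  simpa using integral_smul_fderiv_eq_neg_fderiv_smul_of_integrable (μ := μ) (v := v)
    (f := fun _ : E ↦ (1 : ℝ)) (g := f) (by simp)
    (by simpa using integrable_fderiv_apply hf hfc v)
    (by simpa using hf.continuous.integrable_of_hasCompactSupport hfc) (by simp)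
    (fun x _ ↦ hf.differentiable one_ne_zero x)

end NormedSpace

variable [InnerProductSpace ℝ F]

lemma fderiv_sub_const_mul_norm_sq_apply {w : E → F} {x : E} (hw : DifferentiableAt ℝ w x)
    (ℓ : E →L[ℝ] ℝ) (a : ℝ) (v : E) :
    fderiv ℝ (fun y ↦ (ℓ y - a) * ‖w y‖ ^ 2) x v =
      ℓ v * ‖w x‖ ^ 2 + 2 * (ℓ x - a) * inner ℝ (w x) (fderiv ℝ w x v) := by
  have hderiv : HasFDerivAt (fun y ↦ (ℓ y - a) * ‖w y‖ ^ 2) _ x :=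
    (ℓ.hasFDerivAt.sub_const a).mul hw.hasFDerivAt.norm_sq
  rw [hderiv.fderiv]
  simp only [add_apply, smul_apply, ContinuousLinearMap.comp_apply, coe_innerSL_apply, nsmul_eq_mul,
    Nat.cast_ofNat, smul_eq_mul]
  ring

lemma half_norm_sq_sub_le_norm_sq_add_inner (p q : F) {t R : ℝ} (h : p ≠ 0 → |t| ≤ R) :
    ‖p‖ ^ 2 / 2 - 2 * R ^ 2 * ‖q‖ ^ 2 ≤ ‖p‖ ^ 2 + 2 * t * inner ℝ p q := by
  rcases eq_or_ne p 0 with rfl | hp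
  · simp only [norm_zero, inner_zero_left]
    nlinarith [mul_nonneg (sq_nonneg R) (sq_nonneg ‖q‖)]
  · have hinner : |t * inner ℝ p q| ≤ R * (‖p‖ * ‖q‖) := by
      rw [abs_mul]
      exact mul_le_mul (h hp) (abs_real_inner_le_norm p q) (abs_nonneg _)
        ((abs_nonneg t).trans (h hp))
    linarith [neg_le_of_abs_le hinner, sq_nonneg (‖p‖ - 2 * R * ‖q‖)]

theorem integral_norm_sq_le_integral_norm_fderiv_apply_sq [FiniteDimensional ℝ E]
    [MeasurableSpace E] [BorelSpace E] (μ : Measure E) [μ.IsAddHaarMeasure] {w : E → F}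
    (hw : ContDiff ℝ 1 w) (hwc : HasCompactSupport w) {ℓ : E →L[ℝ] ℝ} {v : E} (hv : ℓ v = 1)
    {a R : ℝ} (hR : ∀ x ∈ Function.support w, |ℓ x - a| ≤ R) :
    ∫ x, ‖w x‖ ^ 2 ∂μ ≤ 4 * R ^ 2 * ∫ x, ‖fderiv ℝ w x v‖ ^ 2 ∂μ := by
  set u : E → ℝ := fun x ↦ (ℓ x - a) * ‖w x‖ ^ 2
  have hu : ContDiff ℝ 1 u := (ℓ.contDiff.sub contDiff_const).mul (hw.norm_sq ℝ)
  have huc : HasCompactSupport u :=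
    (hwc.comp_left (g := fun y ↦ ‖y‖ ^ 2) (by simp)).mul_left
  have hw_sq : Integrable (fun x ↦ ‖w x‖ ^ 2) μ :=
    integrable_norm_sq_of_hasCompactSupport hw.continuous hwc
  have hdw_sq : Integrable (fun x ↦ ‖fderiv ℝ w x v‖ ^ 2) μ :=
    integrable_norm_fderiv_apply_sq hw hwc v
  have hlower (x : E) :
      ‖w x‖ ^ 2 / 2 - 2 * R ^ 2 * ‖fderiv ℝ w x v‖ ^ 2 ≤ fderiv ℝ u x v := by
    rw [fderiv_sub_const_mul_norm_sq_apply (hw.differentiable one_ne_zero x), hv, one_mul]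
    exact half_norm_sq_sub_le_norm_sq_add_inner _ _ (hR x)
  have hint : (∫ x, ‖w x‖ ^ 2 ∂μ) / 2 - 2 * R ^ 2 * ∫ x, ‖fderiv ℝ w x v‖ ^ 2 ∂μ ≤ 0 := by
    rw [← integral_div, ← integral_const_mul,
      ← integral_sub (hw_sq.div_const 2) (hdw_sq.const_mul _),
      ← integral_fderiv_apply_eq_zero hu huc v (μ := μ)]
    exact integral_mono ((hw_sq.div_const 2).sub (hdw_sq.const_mul _))
      (integrable_fderiv_apply hu huc v) hlower
  linarith

end Poincare

section EuclideanSpace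

variable {n : ℕ} {Ω : Set (EuclideanSpace ℝ (Fin n))} {w : EuclideanSpace ℝ (Fin n) → ℂ}

lemma l2sq_nonneg (Ω : Set (EuclideanSpace ℝ (Fin n))) (f : EuclideanSpace ℝ (Fin n) → ℂ) :
    0 ≤ l2sq Ω f :=
  integral_nonneg fun _ ↦ sq_nonneg _

lemma gradsq_nonneg (Ω : Set (EuclideanSpace ℝ (Fin n))) (w : EuclideanSpace ℝ (Fin n) → ℂ) :
    0 ≤ gradsq Ω w :=
  integral_nonneg fun _ ↦ Finset.sum_nonneg fun _ _ ↦ sq_nonneg _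

lemma l2sq_eq_integral {f : EuclideanSpace ℝ (Fin n) → ℂ} (hf : Function.support f ⊆ Ω) :
    l2sq Ω f = ∫ x, ‖f x‖ ^ 2 :=
  setIntegral_eq_integral_of_forall_compl_eq_zero fun x hx ↦ by
    simp [Function.notMem_support.mp fun h ↦ hx (hf h)]

lemma l2sq_pd_le_gradsq (Ω : Set (EuclideanSpace ℝ (Fin n))) (hw : ContDiff ℝ 1 w)
    (hwc : HasCompactSupport w) (j : Fin n) :
    l2sq Ω (pd j w) ≤ gradsq Ω w := by
  have hpd (i : Fin n) : IntegrableOn (fun x ↦ ‖pd i w x‖ ^ 2) Ω :=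
    (integrable_norm_fderiv_apply_sq hw hwc _).integrableOn
  exact integral_mono (hpd j) (integrable_finsetSum _ fun i _ ↦ hpd i) fun x ↦
    Finset.single_le_sum (f := fun i ↦ ‖pd i w x‖ ^ 2) (fun _ _ ↦ sq_nonneg _) (Finset.mem_univ j)

theorem l2sq_le_gradsq {j : Fin n} {a R : ℝ} (hΩ : ∀ x ∈ Ω, |x j - a| ≤ R)
    (hw : ContDiff ℝ 1 w) (hwc : HasCompactSupport w) (hwΩ : tsupport w ⊆ Ω) :
    l2sq Ω w ≤ 4 * R ^ 2 * gradsq Ω w := by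
  have hsupp : Function.support w ⊆ Ω := (subset_tsupport w).trans hwΩ
  have hsupp_pd : Function.support (pd j w) ⊆ Ω :=
    (subset_tsupport _).trans ((tsupport_fderiv_apply_subset ℝ _).trans hwΩ)
  calc
    l2sq Ω w = ∫ x, ‖w x‖ ^ 2 := l2sq_eq_integral hsupp
    _ ≤ 4 * R ^ 2 * ∫ x, ‖pd j w x‖ ^ 2 :=
      integral_norm_sq_le_integral_norm_fderiv_apply_sq volume hw hwc
        (ℓ := EuclideanSpace.proj j) (by simp) fun x hx ↦ hΩ x (hsupp hx)
    _ = 4 * R ^ 2 * l2sq Ω (pd j w) := by rw [l2sq_eq_integral hsupp_pd]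
    _ ≤ 4 * R ^ 2 * gradsq Ω w := by gcongr; exact l2sq_pd_le_gradsq Ω hw hwc j

theorem lower_bound_real_part_general {j : Fin n} {a R : ℝ} (hΩ : ∀ x ∈ Ω, |x j - a| ≤ R)
    (hw : ContDiff ℝ 1 w) (hwc : HasCompactSupport w) (hwΩ : tsupport w ⊆ Ω) {h : ℝ}
    (hh : |h| ≤ 1) :
    h ^ 2 * (l2sq Ω w + h ^ 2 * gradsq Ω w) ≤ (4 * R ^ 2 + 1) * (h ^ 2 * gradsq Ω w) :=
  calc
    h ^ 2 * (l2sq Ω w + h ^ 2 * gradsq Ω w)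
        ≤ h ^ 2 * (4 * R ^ 2 * gradsq Ω w + 1 * gradsq Ω w) := by
      gcongr
      · exact l2sq_le_gradsq hΩ hw hwc hwΩ
      · exact gradsq_nonneg Ω w
      · exact (sq_le_one_iff_abs_le_one h).mpr hh
    _ = (4 * R ^ 2 + 1) * (h ^ 2 * gradsq Ω w) := by ring

end EuclideanSpace

/-- estimate (2.11): lower bound for the real part of the
conjugated operator. -/
theorem lower_bound_real_part
    (n : ℕ) (hn : 1 ≤ n)
    (Ω : Set (EuclideanSpace ℝ (Fin n))) (hΩopen : IsOpen Ω)
    (hΩbdd : Bornology.IsBounded Ω)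
    (ϱ : Fin n → ℝ) (hϱ : ϱ ≠ 0) :
    ∃ C > (0 : ℝ), ∀ h : ℝ, 0 < h → h < 1 →
      ∀ w : EuclideanSpace ℝ (Fin n) → ℂ, IsCcInfty Ω w →
        h ^ 2 * (l2sq Ω w + h ^ 2 * gradsq Ω w) ≤
          C * (l2sq Ω (fun x => ∑ j : Fin n,
              ((h : ℂ) ^ 4 * (pd j)^[4] w x + 6 * (h : ℂ) ^ 2 * (ϱ j : ℂ) ^ 2 * (pd j)^[2] w x
                + (ϱ j : ℂ) ^ 4 * w x)) + h ^ 2 * gradsq Ω w) := by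
  obtain ⟨R, hR⟩ := hΩbdd.exists_norm_le
  have hslab : ∀ x ∈ Ω, |x ⟨0, hn⟩ - 0| ≤ R := fun x hx ↦ by
    simpa using (PiLp.norm_apply_le x ⟨0, hn⟩).trans (hR x hx)
  refine ⟨4 * R ^ 2 + 1, by positivity, fun h h0 h1 w ⟨hw, hwc, hwΩ⟩ ↦ ?_⟩
  refine (lower_bound_real_part_general hslab (hw.of_le (mod_cast le_top)) hwc hwΩ
    (abs_le.mpr ⟨by linarith, h1.le⟩)).trans ?_
  gcongr
  exact le_add_of_nonneg_left (l2sq_nonneg Ω _)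
end
end

section
/- Semiclassical H¹ Carleman estimate for the principal part with linear weight (estimate (1.2) of the paper). Let n ≥ 2, let Ω ⊂ ℝⁿ be a bounded open set, and let ϱ ∈ ℝⁿ be a nonzero vector. Then there exist C > 0 and h₀ ∈ (0,1) such that for all h ∈ (0,h₀) and all w ∈ C_c^∞(Ω): ‖e^{ϱ·x/h} h⁴ Σ_{j=1}^n ∂_{x_j}⁴(e^{−ϱ·x/h} w)‖_{L²(Ω)} ≥ C·h·(‖w‖²_{L²(Ω)} + h²‖∇w‖²_{L²(Ω)})^{1/2}. -/
open MeasureTheory Real Set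

noncomputable section

/-!
Conjugation by `e^{ϱ·x/h}` turns `h ∂_j` into `T_j = h ∂_j - ϱ_j`, and the operator to be bounded
below into the constant-coefficient operator `P = ∑ T_k ^ m`. Hörmander's inequality bounds the
commutator of a constant-coefficient operator of degree at most `m` with a coordinate on a bounded
set, `‖[x_j, P] w‖ ≤ 2 m A ‖P w‖` where `|x| ≤ A`: expand `‖[x_j, P] w‖²` by moving `P` and
`[x_j, P]` across the inner product, which leaves the double commutator, of lower degree. Since
`[x_j, P] = -m h T_j ^ (m - 1)`, this controls `h ‖T_j ^ (m - 1) w‖` for every `j`. As `∂_j` is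
skew, `‖T_j v‖² = h² ‖∂_j v‖² + ϱ_j² ‖v‖²`, so one index with `ϱ_j ≠ 0` controls `h ‖w‖`. The
operator `T_j` is normal, hence `m ↦ ‖T_j ^ m w‖` is log-convex and
`‖T_j w‖ ≤ max ‖w‖ ‖T_j ^ (m - 1) w‖`, which controls the gradient.
-/

lemma mul_sqrt_sq_add_mul_sum_sq_le {ι : Type*} [Fintype ι] {h a B : ℝ} {b : ι → ℝ}
    (hh : 0 ≤ h) (ha : 0 ≤ a) (hb : ∀ j, 0 ≤ b j) (haB : h * a ≤ B) (hbB : ∀ j, h * (h * b j) ≤ B) :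
    h * √(a ^ 2 + h ^ 2 * ∑ j, b j ^ 2) ≤ √(Fintype.card ι + 1) * B := by
  have hB : 0 ≤ B := (mul_nonneg hh ha).trans haB
  have hbj (j : ι) : 0 ≤ h * (h * b j) := mul_nonneg hh (mul_nonneg hh (hb j))
  have hsq : h ^ 2 * (a ^ 2 + h ^ 2 * ∑ j, b j ^ 2) ≤ (Fintype.card ι + 1) * B ^ 2 :=
    calc h ^ 2 * (a ^ 2 + h ^ 2 * ∑ j, b j ^ 2)
        = ∑ j, (h * (h * b j)) ^ 2 + (h * a) ^ 2 := by
          simp only [mul_pow, ← Finset.mul_sum]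
          ring
      _ ≤ ∑ _j : ι, B ^ 2 + B ^ 2 :=
          add_le_add (Finset.sum_le_sum fun j _ => pow_le_pow_left₀ (hbj j) (hbB j) 2)
            (pow_le_pow_left₀ (mul_nonneg hh ha) haB 2)
      _ = (Fintype.card ι + 1) * B ^ 2 := by
          rw [Finset.sum_const, Finset.card_univ, nsmul_eq_mul]
          ring
  have hsqrt := Real.sqrt_le_sqrt hsq
  rwa [Real.sqrt_mul (sq_nonneg h), Real.sqrt_sq hh, Real.sqrt_mul (by positivity),
    Real.sqrt_sq hB] at hsqrt

attribute [local instance] LieRing.ofAssociativeRing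

section Lie

variable {R A : Type*} [CommRing R] [Ring A] [Algebra R A]

lemma lie_mul_eq (x y z : A) : ⁅x, y * z⁆ = ⁅x, y⁆ * z + y * ⁅x, z⁆ := by
  simp only [Ring.lie_def]
  noncomm_ring

lemma lie_mem_adjoin {s : Set A} {x y : A} (hs : ∀ a ∈ s, ⁅x, a⁆ ∈ Algebra.adjoin R s)
    (hy : y ∈ Algebra.adjoin R s) : ⁅x, y⁆ ∈ Algebra.adjoin R s := by
  induction hy using Algebra.adjoin_induction with
  | mem a ha => exact hs a ha
  | algebraMap r =>
    rw [(Algebra.commute_algebraMap_right r x).lie_eq]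
    exact zero_mem _
  | add a b _ _ ha hb => exact lie_add x a b ▸ add_mem ha hb
  | mul a b ha' hb' ha hb =>
    exact lie_mul_eq x a b ▸ add_mem (mul_mem ha hb') (mul_mem ha' hb)

lemma lie_pow_succ_of_lie_eq_smul_one {x t : A} {c : R} (h : ⁅x, t⁆ = c • 1) (m : ℕ) :
    ⁅x, t ^ (m + 1)⁆ = ((m + 1) * c) • t ^ m := by
  induction m with
  | zero => simp [h]
  | succ m ih =>
    rw [pow_succ, lie_mul_eq, ih, h, smul_mul_assoc, ← pow_succ, mul_smul_one, ← add_smul]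
    congr 1
    push_cast
    ring

lemma ad_pow_succ_apply_pow_eq_zero {x t : A} {c : R} (h : ⁅x, t⁆ = c • 1) (m : ℕ) :
    (LieAlgebra.ad R A x ^ (m + 1)) (t ^ m) = 0 := by
  induction m with
  | zero => simp [(Commute.one_right x).lie_eq]
  | succ m ih =>
    rw [pow_succ, Module.End.mul_apply, LieAlgebra.ad_apply,
      lie_pow_succ_of_lie_eq_smul_one h, map_smul, ih, smul_zero]

end Lie

section FormalAdjoint

variable {𝕜 V : Type*} [RCLike 𝕜] [SeminormedAddCommGroup V] [InnerProductSpace 𝕜 V]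

/-- `Q` is a formal adjoint of the everywhere defined, possibly unbounded operator `P`. As `V` is
only seminormed and not complete, a formal adjoint need neither exist nor be unique, so this is a
relation. -/
def IsFormalAdjoint (P Q : Module.End 𝕜 V) : Prop :=
  ∀ u v, inner 𝕜 (P u) v = inner 𝕜 u (Q v)

namespace IsFormalAdjoint

variable {P Q R S X : Module.End 𝕜 V}

lemma symm (h : IsFormalAdjoint P Q) : IsFormalAdjoint Q P := fun u v => by
  rw [← inner_conj_symm, ← h, inner_conj_symm]

lemma add (h : IsFormalAdjoint P Q) (h' : IsFormalAdjoint R S) :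
    IsFormalAdjoint (P + R) (Q + S) := fun u v => by
  simp only [LinearMap.add_apply, inner_add_left, inner_add_right, h u v, h' u v]

lemma sub (h : IsFormalAdjoint P Q) (h' : IsFormalAdjoint R S) :
    IsFormalAdjoint (P - R) (Q - S) := fun u v => by
  simp only [LinearMap.sub_apply, inner_sub_left, inner_sub_right, h u v, h' u v]

lemma mul (h : IsFormalAdjoint P Q) (h' : IsFormalAdjoint R S) :
    IsFormalAdjoint (P * R) (S * Q) := fun u v => by
  simp only [Module.End.mul_apply, h _ v, h' u]

lemma algebraMap (c : 𝕜) :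
    IsFormalAdjoint (algebraMap 𝕜 (Module.End 𝕜 V) c)
      (algebraMap 𝕜 (Module.End 𝕜 V) (starRingEnd 𝕜 c)) := fun u v => by
  simp only [Module.algebraMap_end_apply, inner_smul_left, inner_smul_right]

lemma lie (h : IsFormalAdjoint P Q) (hX : X.IsSymmetric) : IsFormalAdjoint ⁅X, P⁆ ⁅Q, X⁆ :=
  (mul hX h).sub (h.mul hX)

lemma norm_apply_eq (h : IsFormalAdjoint P Q) (hPQ : Commute P Q) (u : V) : ‖P u‖ = ‖Q u‖ := by
  have hsq : ((‖P u‖ : 𝕜) ^ 2) = (‖Q u‖ : 𝕜) ^ 2 := by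
    rw [← inner_self_eq_norm_sq_to_K, ← inner_self_eq_norm_sq_to_K, h, h.symm,
      ← Module.End.mul_apply, ← Module.End.mul_apply, hPQ.eq]
  exact (sq_eq_sq₀ (norm_nonneg _) (norm_nonneg _)).1 (by exact_mod_cast hsq)

lemma norm_sq_apply_le (h : IsFormalAdjoint P Q) (hPQ : Commute P Q) (u : V) :
    ‖P u‖ ^ 2 ≤ ‖u‖ * ‖P (P u)‖ := by
  rw [h.norm_apply_eq hPQ (P u), ← inner_self_eq_norm_sq (𝕜 := 𝕜), h]
  exact re_inner_le_norm _ _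

lemma norm_pow_apply_mono (h : IsFormalAdjoint P Q) (hPQ : Commute P Q) {u : V}
    (hu : ‖u‖ ≤ ‖P u‖) : Monotone fun m : ℕ => ‖(P ^ m) u‖ := by
  refine monotone_nat_of_le_succ fun m => ?_
  induction m with
  | zero => simpa using hu
  | succ m ih =>
    rcases (norm_nonneg ((P ^ (m + 1)) u)).eq_or_lt with hzero | hpos
    · exact hzero ▸ norm_nonneg _
    · refine le_of_mul_le_mul_left ?_ hpos
      calc ‖(P ^ (m + 1)) u‖ * ‖(P ^ (m + 1)) u‖
          = ‖P ((P ^ m) u)‖ ^ 2 := by rw [← Module.End.mul_apply, ← pow_succ', sq]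
        _ ≤ ‖(P ^ m) u‖ * ‖P (P ((P ^ m) u))‖ := h.norm_sq_apply_le hPQ _
        _ = ‖(P ^ m) u‖ * ‖(P ^ (m + 1 + 1)) u‖ := by
          simp only [← Module.End.mul_apply, ← pow_succ']
        _ ≤ ‖(P ^ (m + 1)) u‖ * ‖(P ^ (m + 1 + 1)) u‖ := by gcongr

lemma norm_apply_le_max (h : IsFormalAdjoint P Q) (hPQ : Commute P Q) {m : ℕ} (hm : 1 ≤ m)
    (u : V) : ‖P u‖ ≤ max ‖u‖ ‖(P ^ m) u‖ := by
  rcases le_total ‖P u‖ ‖u‖ with hle | hle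
  · exact le_max_of_le_left hle
  · exact le_max_of_le_right (by simpa using h.norm_pow_apply_mono hPQ hle hm)

end IsFormalAdjoint

section Hormander

variable {P Q X : Module.End 𝕜 V}

lemma inner_lie_apply_self {Q' : Module.End 𝕜 V}
    (hQ : IsFormalAdjoint P Q) (hQ' : IsFormalAdjoint ⁅X, P⁆ Q') (hcomm : Commute ⁅X, P⁆ Q)
    (w : V) :
    inner 𝕜 (⁅X, P⁆ w) (⁅X, P⁆ w) =
      inner 𝕜 (X (P w)) (⁅X, P⁆ w) - inner 𝕜 (X (Q' w)) (Q w) - inner 𝕜 (⁅Q', X⁆ w) (Q w) := by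
  have hlie : ∀ R S : Module.End 𝕜 V, ⁅R, S⁆ w = R (S w) - S (R w) := fun _ _ => rfl
  have hswap : inner 𝕜 (P (X w)) (⁅X, P⁆ w) = inner 𝕜 (Q' (X w)) (Q w) := by
    rw [hQ, hQ'.symm, ← Module.End.mul_apply, ← Module.End.mul_apply, hcomm.eq]
  calc inner 𝕜 (⁅X, P⁆ w) (⁅X, P⁆ w)
      = inner 𝕜 (X (P w)) (⁅X, P⁆ w) - inner 𝕜 (Q' (X w)) (Q w) := by
        rw [← hswap, ← inner_sub_left, ← hlie]
    _ = _ := by rw [hlie Q' X, inner_sub_left]; ring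

theorem norm_lie_apply_le_of_norm_lie_lie_apply_le {Q' : Module.End 𝕜 V} {A B : ℝ} {w : V}
    (hX : X.IsSymmetric) (hA : 0 ≤ A) (hXA : ∀ u, ‖X u‖ ≤ A * ‖u‖)
    (hQ : IsFormalAdjoint P Q) (hPQ : Commute P Q)
    (hQ' : IsFormalAdjoint ⁅X, P⁆ Q') (hPQ' : Commute ⁅X, P⁆ Q') (hcomm : Commute ⁅X, P⁆ Q)
    (hcomm' : Commute ⁅X, ⁅X, P⁆⁆ ⁅Q', X⁆)
    (hB₀ : 0 ≤ B) (hB : ‖⁅X, ⁅X, P⁆⁆ w‖ ≤ B * ‖⁅X, P⁆ w‖) :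
    ‖⁅X, P⁆ w‖ ≤ (2 * A + B) * ‖P w‖ := by
  set a := ‖⁅X, P⁆ w‖ with ha
  set b := ‖P w‖
  have hQw : ‖Q w‖ = b := (hQ.norm_apply_eq hPQ w).symm
  have hQ'w : ‖Q' w‖ = a := (hQ'.norm_apply_eq hPQ' w).symm
  have hQ''w : ‖⁅Q', X⁆ w‖ ≤ B * a := ((hQ'.lie hX).norm_apply_eq hcomm' w) ▸ hB
  have hXP : ‖inner 𝕜 (X (P w)) (⁅X, P⁆ w)‖ ≤ A * b * a :=
    (norm_inner_le_norm _ _).trans (by gcongr; exact hXA _)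
  have hXQ' : ‖inner 𝕜 (X (Q' w)) (Q w)‖ ≤ A * a * b :=
    (norm_inner_le_norm _ _).trans (by rw [hQw, ← hQ'w]; gcongr; exact hXA _)
  have hQ'X : ‖inner 𝕜 (⁅Q', X⁆ w) (Q w)‖ ≤ B * a * b :=
    (norm_inner_le_norm _ _).trans (by rw [hQw]; gcongr)
  have hsq : a * a ≤ (2 * A + B) * b * a :=
    calc a * a = ‖inner 𝕜 (⁅X, P⁆ w) (⁅X, P⁆ w)‖ := by
          rw [inner_self_eq_norm_sq_to_K, norm_pow, RCLike.norm_ofReal, abs_norm, sq]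
      _ ≤ A * b * a + A * a * b + B * a * b := by
          rw [inner_lie_apply_self hQ hQ' hcomm]
          exact (norm_sub_le _ _).trans
            (add_le_add ((norm_sub_le _ _).trans (add_le_add hXP hXQ')) hQ'X)
      _ = (2 * A + B) * b * a := by ring
  rcases (norm_nonneg (⁅X, P⁆ w)).eq_or_lt with hzero | hpos
  · rw [ha, ← hzero]
    positivity
  · exact le_of_mul_le_mul_right hsq hpos

theorem norm_lie_apply_le_of_ad_pow_eq_zero {S : Set (Module.End 𝕜 V)} {A : ℝ}
    (hcomm : ∀ P ∈ S, ∀ Q ∈ S, Commute P Q) (hadj : ∀ P ∈ S, ∃ Q ∈ S, IsFormalAdjoint P Q)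
    (hlie : ∀ P ∈ S, ⁅X, P⁆ ∈ S) (hX : X.IsSymmetric) (hA : 0 ≤ A)
    (hXA : ∀ u, ‖X u‖ ≤ A * ‖u‖) (hP : P ∈ S) {m : ℕ}
    (hm : (LieAlgebra.ad 𝕜 (Module.End 𝕜 V) X ^ (m + 1)) P = 0) (w : V) :
    ‖⁅X, P⁆ w‖ ≤ 2 * m * A * ‖P w‖ := by
  induction m generalizing P with
  | zero =>
    have hXP : ⁅X, P⁆ = 0 := by simpa using hm
    simp [hXP]
  | succ m ih =>
    obtain ⟨Q, hQS, hQ⟩ := hadj P hP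
    obtain ⟨Q', hQS', hQ'⟩ := hadj _ (hlie P hP)
    have hcomm' : Commute ⁅X, ⁅X, P⁆⁆ ⁅Q', X⁆ := by
      rw [← lie_skew Q' X]
      exact (hcomm _ (hlie _ (hlie P hP)) _ (hlie Q' hQS')).neg_right
    have hB := ih (hlie P hP) (by rwa [pow_succ] at hm)
    have hstep := norm_lie_apply_le_of_norm_lie_lie_apply_le hX hA hXA hQ (hcomm P hP Q hQS) hQ'
      (hcomm _ (hlie P hP) Q' hQS') (hcomm _ (hlie P hP) Q hQS) hcomm' (by positivity) hB
    convert hstep using 2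
    push_cast
    ring

end Hormander

section CanonicalPair

open Algebra (adjoin)

variable {ι : Type*}

/-- `D` and `X` satisfy the relations of the partial derivatives `∂_j` and of the multiplications
by the coordinates `x_j`, acting on test functions with the `L²` inner product. -/
structure IsCanonicalPair (D X : ι → Module.End 𝕜 V) : Prop where
  commute : ∀ j k, Commute (D j) (D k)
  lie_self : ∀ j, ⁅X j, D j⁆ = -1
  lie_of_ne : ∀ j k, j ≠ k → ⁅X j, D k⁆ = 0
  isFormalAdjoint_neg : ∀ j, IsFormalAdjoint (D j) (-D j)
  isSymmetric : ∀ j, (X j).IsSymmetric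

/-- The conjugate `h e^{φ/h} ∂_j e^{-φ/h} = h ∂_j - ϱ_j` of the semiclassical derivative by the
linear weight `φ(x) = ϱ · x`, with `D` in the role of `∂`. -/
def conjDeriv (D : ι → Module.End 𝕜 V) (ϱ : ι → ℝ) (h : ℝ) (j : ι) : Module.End 𝕜 V :=
  (h : 𝕜) • D j - algebraMap 𝕜 _ (ϱ j : 𝕜)

variable {D X : ι → Module.End 𝕜 V} {ϱ : ι → ℝ} {h A : ℝ} {j : ι}

lemma commute_of_mem_adjoin_range (hD : ∀ j k, Commute (D j) (D k)) {P Q : Module.End 𝕜 V}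
    (hP : P ∈ adjoin 𝕜 (range D)) (hQ : Q ∈ adjoin 𝕜 (range D)) : Commute P Q := by
  refine Algebra.commute_of_mem_adjoin_of_forall_mem_commute hQ (forall_mem_range.2 fun k => ?_)
  refine (Algebra.commute_of_mem_adjoin_of_forall_mem_commute hP
    (forall_mem_range.2 fun j => ?_)).symm
  exact hD k j

lemma exists_isFormalAdjoint_mem_adjoin_range (hD : ∀ j, IsFormalAdjoint (D j) (-D j))
    {P : Module.End 𝕜 V} (hP : P ∈ adjoin 𝕜 (range D)) :
    ∃ Q ∈ adjoin 𝕜 (range D), IsFormalAdjoint P Q := by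
  induction hP using Algebra.adjoin_induction with
  | mem P hP =>
    obtain ⟨j, rfl⟩ := hP
    exact ⟨-D j, neg_mem (Algebra.subset_adjoin (mem_range_self j)), hD j⟩
  | algebraMap c => exact ⟨_, algebraMap_mem _ _, .algebraMap c⟩
  | add P R _ _ hP hR =>
    obtain ⟨⟨Q, hQ, hPQ⟩, ⟨S, hS, hRS⟩⟩ := hP, hR
    exact ⟨Q + S, add_mem hQ hS, hPQ.add hRS⟩
  | mul P R _ _ hP hR =>
    obtain ⟨⟨Q, hQ, hPQ⟩, ⟨S, hS, hRS⟩⟩ := hP, hR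
    exact ⟨S * Q, mul_mem hS hQ, hPQ.mul hRS⟩

lemma conjDeriv_mem_adjoin_range : conjDeriv D ϱ h j ∈ adjoin 𝕜 (range D) :=
  sub_mem ((adjoin 𝕜 (range D)).smul_mem (Algebra.subset_adjoin (mem_range_self j)) _)
    (algebraMap_mem _ _)

lemma lie_conjDeriv (Y : Module.End 𝕜 V) : ⁅Y, conjDeriv D ϱ h j⁆ = (h : 𝕜) • ⁅Y, D j⁆ := by
  rw [conjDeriv, lie_sub, lie_smul, (Algebra.commute_algebraMap_right _ Y).lie_eq, sub_zero]

lemma norm_sq_conjDeriv_apply (hD : IsFormalAdjoint (D j) (-D j)) (v : V) :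
    ‖conjDeriv D ϱ h j v‖ ^ 2 = h ^ 2 * ‖D j v‖ ^ 2 + ϱ j ^ 2 * ‖v‖ ^ 2 := by
  have horth : RCLike.re (inner 𝕜 (D j v) v) = 0 := by
    have hskew := congrArg RCLike.re (hD v v)
    rw [LinearMap.neg_apply, inner_neg_right, map_neg, inner_re_symm v] at hskew
    linarith
  rw [conjDeriv, LinearMap.sub_apply, LinearMap.smul_apply, Module.algebraMap_end_apply,
    norm_sub_sq (𝕜 := 𝕜), inner_smul_real_left, inner_smul_right, RCLike.smul_re,
    RCLike.re_ofReal_mul, horth, norm_smul, norm_smul, RCLike.norm_ofReal, RCLike.norm_ofReal,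
    mul_pow, mul_pow, sq_abs, sq_abs]
  ring

lemma abs_mul_norm_apply_le_norm_conjDeriv_apply (hD : IsFormalAdjoint (D j) (-D j)) (v : V) :
    |h| * ‖D j v‖ ≤ ‖conjDeriv D ϱ h j v‖ := by
  refine abs_le_of_sq_le_sq' ?_ (norm_nonneg _) |>.2
  rw [norm_sq_conjDeriv_apply hD, mul_pow, sq_abs]
  exact le_add_of_nonneg_right (by positivity)

lemma abs_pow_mul_norm_le_norm_conjDeriv_pow_apply (hD : IsFormalAdjoint (D j) (-D j)) (m : ℕ)
    (v : V) : |ϱ j| ^ m * ‖v‖ ≤ ‖(conjDeriv D ϱ h j ^ m) v‖ := by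
  induction m with
  | zero => simp
  | succ m ih =>
    calc |ϱ j| ^ (m + 1) * ‖v‖ = |ϱ j| * (|ϱ j| ^ m * ‖v‖) := by ring
      _ ≤ |ϱ j| * ‖(conjDeriv D ϱ h j ^ m) v‖ := by gcongr
      _ ≤ ‖conjDeriv D ϱ h j ((conjDeriv D ϱ h j ^ m) v)‖ := by
        refine abs_le_of_sq_le_sq' ?_ (norm_nonneg _) |>.2
        rw [norm_sq_conjDeriv_apply hD, mul_pow, sq_abs]
        exact le_add_of_nonneg_left (by positivity)
      _ = ‖(conjDeriv D ϱ h j ^ (m + 1)) v‖ := by rw [pow_succ', Module.End.mul_apply]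

namespace IsCanonicalPair

variable (hDX : IsCanonicalPair D X)

include hDX

lemma lie_conjDeriv_self : ⁅X j, conjDeriv D ϱ h j⁆ = (-h : 𝕜) • 1 := by
  rw [lie_conjDeriv, hDX.lie_self, smul_neg, neg_smul]

lemma commute_conjDeriv_of_ne {k : ι} (hjk : j ≠ k) : Commute (X j) (conjDeriv D ϱ h k) := by
  rw [commute_iff_lie_eq, lie_conjDeriv, hDX.lie_of_ne j k hjk, smul_zero]

lemma lie_mem_adjoin_range {P : Module.End 𝕜 V} (hP : P ∈ adjoin 𝕜 (range D)) :
    ⁅X j, P⁆ ∈ adjoin 𝕜 (range D) := by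
  refine lie_mem_adjoin (forall_mem_range.2 fun k => ?_) hP
  rcases eq_or_ne j k with rfl | hjk
  · exact hDX.lie_self j ▸ neg_mem (one_mem _)
  · exact hDX.lie_of_ne j k hjk ▸ zero_mem _

lemma norm_conjDeriv_apply_le_max {m : ℕ} (hm : 1 ≤ m) (v : V) :
    ‖conjDeriv D ϱ h j v‖ ≤ max ‖v‖ ‖(conjDeriv D ϱ h j ^ m) v‖ := by
  obtain ⟨Q, hQ, hadj⟩ := exists_isFormalAdjoint_mem_adjoin_range hDX.isFormalAdjoint_neg
    (conjDeriv_mem_adjoin_range (ϱ := ϱ) (h := h) (j := j))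
  exact hadj.norm_apply_le_max
    (commute_of_mem_adjoin_range hDX.commute conjDeriv_mem_adjoin_range hQ) hm v

variable [Fintype ι]

lemma lie_sum_conjDeriv_pow_succ (m : ℕ) :
    ⁅X j, ∑ k, conjDeriv D ϱ h k ^ (m + 1)⁆ =
      ((m + 1) * -h : 𝕜) • conjDeriv D ϱ h j ^ m := by
  rw [lie_sum, Finset.sum_eq_single_of_mem j (Finset.mem_univ j) fun k _ hk =>
      ((hDX.commute_conjDeriv_of_ne hk.symm).pow_right _).lie_eq,
    lie_pow_succ_of_lie_eq_smul_one hDX.lie_conjDeriv_self]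

theorem abs_mul_norm_conjDeriv_pow_apply_le (hA : 0 ≤ A) (hXA : ∀ u, ‖X j u‖ ≤ A * ‖u‖) (m : ℕ)
    (w : V) :
    |h| * ‖(conjDeriv D ϱ h j ^ m) w‖ ≤ 2 * A * ‖(∑ k, conjDeriv D ϱ h k ^ (m + 1)) w‖ := by
  set P := ∑ k, conjDeriv D ϱ h k ^ (m + 1)
  have hlie : ⁅X j, P⁆ = ((m + 1) * -h : 𝕜) • conjDeriv D ϱ h j ^ m :=
    hDX.lie_sum_conjDeriv_pow_succ m
  have hnil : (LieAlgebra.ad 𝕜 (Module.End 𝕜 V) (X j) ^ (m + 1 + 1)) P = 0 := by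
    rw [pow_succ, Module.End.mul_apply, LieAlgebra.ad_apply, hlie, map_smul,
      ad_pow_succ_apply_pow_eq_zero hDX.lie_conjDeriv_self, smul_zero]
  have hormander := norm_lie_apply_le_of_ad_pow_eq_zero (S := adjoin 𝕜 (range D))
    (fun _ hP _ hQ => commute_of_mem_adjoin_range hDX.commute hP hQ)
    (fun _ hP => exists_isFormalAdjoint_mem_adjoin_range hDX.isFormalAdjoint_neg hP)
    (fun _ hP => hDX.lie_mem_adjoin_range hP) (hDX.isSymmetric j) hA hXA
    (sum_mem fun k _ => pow_mem conjDeriv_mem_adjoin_range _) hnil w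
  have hnorm : ‖((m + 1) * -h : 𝕜)‖ = (m + 1) * |h| := by
    rw [norm_mul, norm_neg, RCLike.norm_ofReal]
    norm_cast
  rw [hlie, LinearMap.smul_apply, norm_smul, hnorm] at hormander
  push_cast at hormander
  refine le_of_mul_le_mul_left (a := (m + 1 : ℝ)) ?_ (by positivity)
  linarith

theorem exists_le_norm_sum_conjDeriv_pow_apply (hA : 0 < A) (hXA : ∀ j u, ‖X j u‖ ≤ A * ‖u‖)
    (hϱ : ϱ ≠ 0) {m : ℕ} (hm : 2 ≤ m) :
    ∃ C > (0 : ℝ), ∀ h : ℝ, 0 < h → ∀ w : V,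
      C * h * √(‖w‖ ^ 2 + h ^ 2 * ∑ j, ‖D j w‖ ^ 2) ≤ ‖(∑ k, conjDeriv D ϱ h k ^ m) w‖ := by
  obtain ⟨m, rfl⟩ := Nat.exists_eq_add_of_le' (one_le_two.trans hm)
  obtain ⟨i, hi⟩ := Function.ne_iff.1 hϱ
  have hϱi : 0 < |ϱ i| ^ m := pow_pos (abs_pos.2 hi) m
  set M := max (|ϱ i| ^ m)⁻¹ 1
  refine ⟨(√(Fintype.card ι + 1) * M * (2 * A))⁻¹, by positivity, fun h hh w => ?_⟩
  set N := 2 * A * ‖(∑ k, conjDeriv D ϱ h k ^ (m + 1)) w‖ with hN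
  have hNnonneg : 0 ≤ N := by positivity
  have htop (j : ι) : h * ‖(conjDeriv D ϱ h j ^ m) w‖ ≤ N := by
    simpa only [abs_of_pos hh] using
      hDX.abs_mul_norm_conjDeriv_pow_apply_le (ϱ := ϱ) (h := h) hA.le (hXA j) m w
  have hw : h * ‖w‖ ≤ M * N := by
    have hlow := abs_pow_mul_norm_le_norm_conjDeriv_pow_apply (ϱ := ϱ) (h := h)
      (hDX.isFormalAdjoint_neg i) m w
    calc h * ‖w‖ = (|ϱ i| ^ m)⁻¹ * (h * (|ϱ i| ^ m * ‖w‖)) := by field_simp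
      _ ≤ (|ϱ i| ^ m)⁻¹ * N := by
        gcongr
        exact (mul_le_mul_of_nonneg_left hlow hh.le).trans (htop i)
      _ ≤ M * N := mul_le_mul_of_nonneg_right (le_max_left _ _) hNnonneg
  have hDw (j : ι) : h * (h * ‖D j w‖) ≤ M * N := by
    have hmax := (abs_mul_norm_apply_le_norm_conjDeriv_apply (ϱ := ϱ) (h := h)
      (hDX.isFormalAdjoint_neg j) w).trans
      (hDX.norm_conjDeriv_apply_le_max (Nat.le_of_succ_le_succ hm) w)
    rw [abs_of_pos hh] at hmax
    refine (mul_le_mul_of_nonneg_left hmax hh.le).trans ?_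
    rw [mul_max_of_nonneg _ _ hh.le]
    exact max_le hw ((htop j).trans (le_mul_of_one_le_left hNnonneg (le_max_right _ _)))
  rw [mul_assoc, inv_mul_le_iff₀ (by positivity), mul_assoc (_ * M), ← hN, mul_assoc √_]
  exact mul_sqrt_sq_add_mul_sum_sq_le hh.le (norm_nonneg w) (fun j => norm_nonneg (D j w)) hw hDw

end IsCanonicalPair

end CanonicalPair

end FormalAdjoint

section PartialDerivatives

variable {n : ℕ} {j k : Fin n} {u v : EuclideanSpace ℝ (Fin n) → ℂ} {x : EuclideanSpace ℝ (Fin n)}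

lemma pd_add (hu : Differentiable ℝ u) (hv : Differentiable ℝ v) :
    pd j (u + v) = pd j u + pd j v := by
  ext x
  simp only [pd, Pi.add_apply, fderiv_add (hu x) (hv x), add_apply]

lemma pd_const_smul (c : ℂ) : pd j (c • u) = c • pd j u := by
  ext x
  simp only [pd, Pi.smul_apply, fderiv_const_smul_field, smul_apply]

lemma pd_mul (hu : DifferentiableAt ℝ u x) (hv : DifferentiableAt ℝ v x) :
    pd j (u * v) x = u x * pd j v x + pd j u x * v x := by
  simp only [pd, fderiv_mul hu hv, add_apply, smul_apply, smul_eq_mul, mul_comm (v x)]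

lemma pd_comm (hu : ContDiff ℝ 2 u) : pd j (pd k u) = pd k (pd j u) := by
  ext x
  have hdiff : DifferentiableAt ℝ (fderiv ℝ u) x :=
    (hu.fderiv_right (m := 1) one_add_one_eq_two.le).differentiable one_ne_zero x
  have hsymm : IsSymmSndFDerivAt ℝ u x := hu.contDiffAt.isSymmSndFDerivAt (by simp)
  unfold pd
  rw [fderiv_clm_apply hdiff (differentiableAt_const _),
    fderiv_clm_apply hdiff (differentiableAt_const _)]
  simpa using hsymm.eq _ _

/-- The coordinate function `x ↦ x_j`, complex valued. -/
def coord (j : Fin n) : EuclideanSpace ℝ (Fin n) →L[ℝ] ℂ :=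
  Complex.ofRealCLM ∘L EuclideanSpace.proj j

@[simp]
lemma coord_apply : coord j x = (x j : ℂ) := rfl

lemma pd_coord : pd k (coord j) x = if j = k then 1 else 0 := by
  rw [pd, ContinuousLinearMap.fderiv, coord_apply, PiLp.single_apply]
  split_ifs <;> simp

/-- The Carleman weight `e^{-ϱ·x/h}`. -/
def expWeight (ϱ : Fin n → ℝ) (h : ℝ) (x : EuclideanSpace ℝ (Fin n)) : ℂ :=
  (Real.exp (-(∑ j, ϱ j * x j) / h) : ℂ)

variable {ϱ : Fin n → ℝ} {h : ℝ}

lemma exp_mul_expWeight :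
    (Real.exp ((∑ j, ϱ j * x j) / h) : ℂ) * expWeight ϱ h x = 1 := by
  rw [expWeight, ← Complex.ofReal_mul, ← Real.exp_add, ← add_div, add_neg_cancel, zero_div,
    Real.exp_zero, Complex.ofReal_one]

lemma expWeight_eq_cexp :
    expWeight ϱ h = fun x =>
      Complex.exp
        ((-(h : ℂ)⁻¹ • ∑ j, (ϱ j : ℂ) • coord j : EuclideanSpace ℝ (Fin n) →L[ℝ] ℂ) x) := by
  ext x
  simp [expWeight, div_eq_inv_mul]

lemma differentiable_expWeight : Differentiable ℝ (expWeight ϱ h) := by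
  rw [expWeight_eq_cexp]
  exact (ContinuousLinearMap.differentiable _).cexp

lemma pd_expWeight : pd k (expWeight ϱ h) x = -(ϱ k / h) * expWeight ϱ h x := by
  have hcoord : ∑ j, (ϱ j : ℂ) * coord j (EuclideanSpace.single k 1) = ϱ k := by
    simp only [coord_apply, PiLp.single_apply]
    rw [Finset.sum_eq_single_of_mem k (Finset.mem_univ k) fun j _ hjk => by simp [hjk]]
    simp
  rw [pd, expWeight_eq_cexp, (ContinuousLinearMap.hasFDerivAt _).cexp.fderiv]
  simp only [smul_apply, sum_apply, smul_eq_mul, hcoord]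
  ring

end PartialDerivatives

/-- The space `C_c^∞(Ω)`, as a subspace of the space of all functions. -/
def ccInftySubmodule {n : ℕ} (Ω : Set (EuclideanSpace ℝ (Fin n))) :
    Submodule ℂ (EuclideanSpace ℝ (Fin n) → ℂ) where
  carrier := {w | IsCcInfty Ω w}
  zero_mem' := ⟨contDiff_const, HasCompactSupport.zero, by simp [tsupport]⟩
  add_mem' := fun {u v} hu hv =>
    ⟨hu.1.add hv.1, hu.2.1.add hv.2.1, (tsupport_add u v).trans (union_subset hu.2.2 hv.2.2)⟩
  smul_mem' := fun c u hu =>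
    ⟨contDiff_const.smul hu.1, hu.2.1.smul_left (f := fun _ => c),
      (tsupport_smul_subset_right (fun _ => c) u).trans hu.2.2⟩

/-- The space `C_c^∞(Ω)` with the `L²` seminorm. It is a type synonym of `ccInftySubmodule Ω`, so
that this seminorm does not compete with the topology of pointwise convergence. -/
def CcInfty {n : ℕ} (Ω : Set (EuclideanSpace ℝ (Fin n))) : Type :=
  ccInftySubmodule Ω

namespace CcInfty

variable {n : ℕ} {Ω : Set (EuclideanSpace ℝ (Fin n))} {j k : Fin n} {A h : ℝ} {ϱ : Fin n → ℝ}
  {x : EuclideanSpace ℝ (Fin n)}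

instance : AddCommGroup (CcInfty Ω) := inferInstanceAs (AddCommGroup (ccInftySubmodule Ω))

instance : Module ℂ (CcInfty Ω) := inferInstanceAs (Module ℂ (ccInftySubmodule Ω))

instance : FunLike (CcInfty Ω) (EuclideanSpace ℝ (Fin n)) ℂ where
  coe := Subtype.val
  coe_injective := Subtype.coe_injective

lemma coe_add (f g : CcInfty Ω) : ⇑(f + g) = f + g := rfl

lemma coe_sum {ι : Type*} (s : Finset ι) (f : ι → CcInfty Ω) :
    ⇑(∑ i ∈ s, f i) = ∑ i ∈ s, ⇑(f i) :=
  map_sum (ccInftySubmodule Ω).subtype f s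

lemma coe_smul (c : ℂ) (f : CcInfty Ω) : ⇑(c • f) = c • ⇑f := rfl

lemma contDiff (f : CcInfty Ω) : ContDiff ℝ (⊤ : ℕ∞) f := f.2.1

lemma hasCompactSupport (f : CcInfty Ω) : HasCompactSupport f := f.2.2.1

lemma differentiable (f : CcInfty Ω) : Differentiable ℝ f := f.contDiff.differentiable (by simp)

lemma apply_eq_zero_of_notMem (f : CcInfty Ω) (hx : x ∉ Ω) : f x = 0 :=
  image_eq_zero_of_notMem_tsupport fun hmem => hx (f.2.2.2 hmem)

lemma integrable_inner (f g : CcInfty Ω) : Integrable fun x => inner ℂ (f x) (g x) := by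
  refine (f.contDiff.continuous.inner g.contDiff.continuous).integrable_of_hasCompactSupport ?_
  refine f.hasCompactSupport.mono fun x hx => ?_
  contrapose! hx
  simp only [Function.mem_support, not_not] at hx ⊢
  rw [hx, inner_zero_left]

lemma integrable_norm_sq (f : CcInfty Ω) : Integrable fun x => ‖f x‖ ^ 2 := by
  simpa only [inner_self_eq_norm_sq] using (f.integrable_inner f).re

/-- The `L²` inner product. -/
@[reducible]
def innerCore (Ω : Set (EuclideanSpace ℝ (Fin n))) : PreInnerProductSpace.Core ℂ (CcInfty Ω) where
  inner f g := ∫ x, inner ℂ (f x) (g x)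
  conj_inner_symm f g := by simp only [← integral_conj, inner_conj_symm]
  re_inner_nonneg f := by
    rw [← integral_re (f.integrable_inner f)]
    exact integral_nonneg fun x => inner_self_nonneg
  add_left f g k := by
    simp only [coe_add, Pi.add_apply, inner_add_left]
    exact integral_add (f.integrable_inner k) (g.integrable_inner k)
  smul_left f g c := by
    simp only [coe_smul, Pi.smul_apply, inner_smul_left, integral_const_mul]

instance : SeminormedAddCommGroup (CcInfty Ω) :=
  @InnerProductSpace.Core.toSeminormedAddCommGroup ℂ (CcInfty Ω) _ _ _ (innerCore Ω)

instance : InnerProductSpace ℂ (CcInfty Ω) := InnerProductSpace.ofCore (innerCore Ω)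

lemma inner_eq_integral (f g : CcInfty Ω) : inner ℂ f g = ∫ x, inner ℂ (f x) (g x) := rfl

lemma norm_sq_eq_integral (f : CcInfty Ω) : ‖f‖ ^ 2 = ∫ x, ‖f x‖ ^ 2 := by
  rw [← inner_self_eq_norm_sq (𝕜 := ℂ), inner_eq_integral, ← integral_re (f.integrable_inner f)]
  simp only [inner_self_eq_norm_sq]

lemma l2sq_coe (f : CcInfty Ω) : l2sq Ω f = ‖f‖ ^ 2 := by
  rw [norm_sq_eq_integral, l2sq]
  refine setIntegral_eq_integral_of_forall_compl_eq_zero fun x hx => ?_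
  simp [f.apply_eq_zero_of_notMem hx]

lemma l2norm_coe (f : CcInfty Ω) : l2norm Ω f = ‖f‖ := by
  rw [l2norm, l2sq_coe, Real.sqrt_sq (norm_nonneg f)]

/-- The operator `∂_j` on `C_c^∞(Ω)`. -/
def partialDeriv (j : Fin n) : Module.End ℂ (CcInfty Ω) where
  toFun f := ⟨pd j f,
    (f.contDiff.fderiv_right (m := (⊤ : ℕ∞)) (by simp)).clm_apply contDiff_const,
    f.hasCompactSupport.fderiv_apply (𝕜 := ℝ) _, (tsupport_fderiv_apply_subset ℝ _).trans f.2.2.2⟩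
  map_add' f g := DFunLike.coe_injective (pd_add f.differentiable g.differentiable)
  map_smul' c _ := DFunLike.coe_injective (pd_const_smul c)

/-- The operator of multiplication by `x_j` on `C_c^∞(Ω)`. -/
def mulCoord (j : Fin n) : Module.End ℂ (CcInfty Ω) where
  toFun f := ⟨coord j * f, (coord j).contDiff.mul f.contDiff, f.hasCompactSupport.mul_left,
    tsupport_mul_subset_right.trans f.2.2.2⟩
  map_add' f g := DFunLike.coe_injective (mul_add _ (f : _ → ℂ) g)
  map_smul' c f := DFunLike.coe_injective (mul_smul_comm c _ (f : _ → ℂ))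

lemma coe_partialDeriv (f : CcInfty Ω) : ⇑(partialDeriv j f) = pd j f := rfl

lemma coe_mulCoord (f : CcInfty Ω) : ⇑(mulCoord j f) = coord j * f := rfl

lemma gradsq_coe (f : CcInfty Ω) : gradsq Ω f = ∑ j, ‖partialDeriv j f‖ ^ 2 := by
  simp only [gradsq, ← coe_partialDeriv]
  rw [integral_finsetSum _ fun j _ => (partialDeriv j f).integrable_norm_sq.integrableOn]
  exact Finset.sum_congr rfl fun j _ => l2sq_coe _

lemma commute_partialDeriv (j k : Fin n) :
    Commute (partialDeriv j : Module.End ℂ (CcInfty Ω)) (partialDeriv k) :=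
  LinearMap.ext fun f =>
    DFunLike.coe_injective (pd_comm (f.contDiff.of_le (WithTop.coe_le_coe.2 le_top)))

lemma lie_mulCoord_partialDeriv_apply (j k : Fin n) (f : CcInfty Ω) (x) :
    ⁅(mulCoord j : Module.End ℂ (CcInfty Ω)), partialDeriv k⁆ f x =
      if j = k then -f x else 0 := by
  change coord j x * pd k f x - pd k (coord j * f) x = _
  rw [pd_mul (coord j).differentiableAt (f.differentiable x), pd_coord]
  split_ifs <;> ring

lemma isFormalAdjoint_partialDeriv (j : Fin n) :
    IsFormalAdjoint (partialDeriv j : Module.End ℂ (CcInfty Ω)) (-partialDeriv j) := fun u v => by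
  have hparts := integral_bilinear_fderiv_right_eq_neg_left_of_integrable (μ := volume)
    (v := EuclideanSpace.single j (1 : ℝ))
    (B := (isBoundedBilinearMap_inner (𝕜 := ℂ) (E := ℂ)).toContinuousLinearMap)
    ((partialDeriv j u).integrable_inner v) (u.integrable_inner (partialDeriv j v))
    (u.integrable_inner v) (fun x _ => u.differentiable x) (fun x _ => v.differentiable x)
  rw [LinearMap.neg_apply, inner_neg_right, inner_eq_integral, inner_eq_integral]
  exact neg_eq_iff_eq_neg.1 hparts.symm

lemma isSymmetric_mulCoord (j : Fin n) :
    (mulCoord j : Module.End ℂ (CcInfty Ω)).IsSymmetric := fun u v => by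
  simp only [inner_eq_integral, coe_mulCoord, Pi.mul_apply, coord_apply, RCLike.inner_apply,
    map_mul, Complex.conj_ofReal]
  congr 1 with x
  ring

lemma isCanonicalPair : IsCanonicalPair (V := CcInfty Ω) partialDeriv mulCoord where
  commute := commute_partialDeriv
  lie_self j := LinearMap.ext fun f => DFunLike.ext _ _ fun x => by
    exact (lie_mulCoord_partialDeriv_apply j j f x).trans (if_pos rfl)
  lie_of_ne j k hjk := LinearMap.ext fun f => DFunLike.ext _ _ fun x => by
    exact (lie_mulCoord_partialDeriv_apply j k f x).trans (if_neg hjk)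
  isFormalAdjoint_neg := isFormalAdjoint_partialDeriv
  isSymmetric := isSymmetric_mulCoord

lemma norm_mulCoord_apply_le (hA : 0 ≤ A) (hΩ : ∀ x ∈ Ω, ‖x‖ ≤ A) (j : Fin n) (f : CcInfty Ω) :
    ‖mulCoord j f‖ ≤ A * ‖f‖ := by
  refine le_of_sq_le_sq ?_ (by positivity)
  rw [mul_pow, norm_sq_eq_integral, norm_sq_eq_integral, ← integral_const_mul]
  refine integral_mono (integrable_norm_sq _) (f.integrable_norm_sq.const_mul _) fun x => ?_
  simp only [coe_mulCoord, Pi.mul_apply, coord_apply, norm_mul, Complex.norm_real, mul_pow]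
  by_cases hx : x ∈ Ω
  · gcongr
    exact (PiLp.norm_apply_le x j).trans (hΩ x hx)
  · simp [f.apply_eq_zero_of_notMem hx]

lemma smul_pd_expWeight_mul (hh : h ≠ 0) (f : CcInfty Ω) :
    (h : ℂ) • pd k (expWeight ϱ h * f) = expWeight ϱ h * conjDeriv partialDeriv ϱ h k f := by
  ext x
  have hconj : conjDeriv partialDeriv ϱ h k f x = h * pd k f x - ϱ k * f x := rfl
  have hh' : (h : ℂ) ≠ 0 := Complex.ofReal_ne_zero.2 hh
  rw [Pi.smul_apply, smul_eq_mul, pd_mul (differentiable_expWeight x) (f.differentiable x),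
    pd_expWeight, Pi.mul_apply, hconj]
  field_simp
  ring

lemma pow_smul_iterate_pd_expWeight_mul (hh : h ≠ 0) (m : ℕ) (f : CcInfty Ω) :
    (h : ℂ) ^ m • (pd k)^[m] (expWeight ϱ h * f) =
      expWeight ϱ h * (conjDeriv partialDeriv ϱ h k ^ m) f := by
  induction m with
  | zero => simp
  | succ m ih =>
    rw [pow_succ', mul_smul, Function.iterate_succ_apply', ← pd_const_smul, ih,
      smul_pd_expWeight_mul hh, pow_succ', Module.End.mul_apply]

lemma exp_mul_pow_mul_sum_iterate_pd_expWeight_mul (hh : h ≠ 0) (m : ℕ) (f : CcInfty Ω) :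
    (Real.exp ((∑ j, ϱ j * x j) / h) : ℂ) * (h : ℂ) ^ m *
        ∑ j, (pd j)^[m] (expWeight ϱ h * ⇑f) x =
      (∑ k, conjDeriv partialDeriv ϱ h k ^ m) f x := by
  have hiter (j : Fin n) : (h : ℂ) ^ m * (pd j)^[m] (expWeight ϱ h * f) x =
      expWeight ϱ h x * (conjDeriv partialDeriv ϱ h j ^ m) f x :=
    congrFun (pow_smul_iterate_pd_expWeight_mul hh m f) x
  have hsum : (∑ k, conjDeriv partialDeriv ϱ h k ^ m) f x =
      ∑ k, (conjDeriv partialDeriv ϱ h k ^ m) f x := by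
    rw [LinearMap.sum_apply, coe_sum, Finset.sum_apply]
  rw [mul_assoc, Finset.mul_sum, Finset.sum_congr rfl fun j _ => hiter j, ← Finset.mul_sum,
    ← mul_assoc, exp_mul_expWeight, one_mul, hsum]

end CcInfty

theorem carleman_principal_linear_weight_general {n : ℕ} {Ω : Set (EuclideanSpace ℝ (Fin n))}
    (hΩ : Bornology.IsBounded Ω) {ϱ : Fin n → ℝ} (hϱ : ϱ ≠ 0) {m : ℕ} (hm : 2 ≤ m) :
    ∃ C > (0 : ℝ), ∀ h : ℝ, 0 < h → ∀ w : EuclideanSpace ℝ (Fin n) → ℂ, IsCcInfty Ω w →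
      C * h * √(l2sq Ω w + h ^ 2 * gradsq Ω w) ≤
        l2norm Ω (fun x =>
          (Real.exp ((∑ j, ϱ j * x j) / h) : ℂ) * (h : ℂ) ^ m *
            (∑ j, (pd j)^[m]
              (fun y => (Real.exp (-(∑ j, ϱ j * y j) / h) : ℂ) * w y) x)) := by
  obtain ⟨A, hA, hΩA⟩ := hΩ.exists_pos_norm_le
  obtain ⟨C, hC, hle⟩ := CcInfty.isCanonicalPair.exists_le_norm_sum_conjDeriv_pow_apply hA
    (CcInfty.norm_mulCoord_apply_le hA.le hΩA) hϱ hm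
  refine ⟨C, hC, fun h hh w hw => ?_⟩
  let f : CcInfty Ω := ⟨w, hw⟩
  have hop : (fun x => (Real.exp ((∑ j, ϱ j * x j) / h) : ℂ) * (h : ℂ) ^ m *
      ∑ j, (pd j)^[m] (expWeight ϱ h * w) x) =
        ⇑((∑ k, conjDeriv CcInfty.partialDeriv ϱ h k ^ m) f) :=
    funext fun x => CcInfty.exp_mul_pow_mul_sum_iterate_pd_expWeight_mul hh.ne' m f
  calc C * h * √(l2sq Ω w + h ^ 2 * gradsq Ω w)
      = C * h * √(‖f‖ ^ 2 + h ^ 2 * ∑ j, ‖CcInfty.partialDeriv j f‖ ^ 2) := by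
        rw [← f.l2sq_coe, ← f.gradsq_coe]; rfl
    _ ≤ ‖(∑ k, conjDeriv CcInfty.partialDeriv ϱ h k ^ m) f‖ := hle h hh f
    _ = _ := by rw [← CcInfty.l2norm_coe, ← hop]; rfl

/-- estimate (1.2): semiclassical H¹ Carleman estimate for the
principal part with linear weight. -/
theorem carleman_principal_linear_weight
    (n : ℕ) (hn : 2 ≤ n)
    (Ω : Set (EuclideanSpace ℝ (Fin n))) (hΩopen : IsOpen Ω)
    (hΩbdd : Bornology.IsBounded Ω)
    (ϱ : Fin n → ℝ) (hϱ : ϱ ≠ 0) :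
    ∃ C > (0 : ℝ), ∃ h₀ : ℝ, 0 < h₀ ∧ h₀ < 1 ∧
      ∀ h : ℝ, 0 < h → h < h₀ →
        ∀ w : EuclideanSpace ℝ (Fin n) → ℂ, IsCcInfty Ω w →
          C * h * Real.sqrt (l2sq Ω w + h ^ 2 * gradsq Ω w) ≤
            l2norm Ω (fun x =>
              (Real.exp ((∑ j : Fin n, ϱ j * x j) / h) : ℂ) * (h : ℂ) ^ 4 *
                (∑ j : Fin n, (pd j)^[4]
                  (fun y => (Real.exp (-(∑ j : Fin n, ϱ j * y j) / h) : ℂ) * w y) x)) := by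
  obtain ⟨C, hC, hle⟩ := carleman_principal_linear_weight_general hΩbdd hϱ (m := 4) (by norm_num)
  exact ⟨C, hC, 1 / 2, by norm_num, by norm_num, fun h hh _ => hle h hh⟩
end
end
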